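/- arXiv:1012.1389 — 4 statements merged into one kernel-verified Lean document; each statement's English description precedes it below -/
import Mathlib

section
/- Let A be a Banach algebra with a bounded approximate identity. If A ⊗̂ A^{op} is amenable, then A is amenable. -/
open Filter Topology MulOpposite

/-- A Banach `A`-bimodule structure on the Banach space `X`:
`L a x = a • x` (left action), `R a x = x • a` (right action),
given as continuous bilinear maps. -/
structure BanachBimodule (A X : Type*) [NonUnitalNormedRing A] [NormedSpace ℂ A]
    [NormedAddCommGroup X] [NormedSpace ℂ X] where
  L : A →L[ℂ] X →L[ℂ] X
  R : A →L[ℂ] X →L[ℂ] X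
  L_mul : ∀ a b : A, L (a * b) = (L a).comp (L b)
  R_mul : ∀ a b : A, R (a * b) = (R b).comp (R a)
  LR_comm : ∀ (a b : A) (x : X), R b (L a x) = L a (R b x)

/-- `D : A → X*` is a derivation into the dual Banach bimodule of `X`, written
pointwise: `D(ab) = a·D(b) + D(a)·b` where `(a·f)(x) = f(x·a)`, `(f·a)(x) = f(a·x)`. -/
def IsDualDerivation {A X : Type*} [NonUnitalNormedRing A] [NormedSpace ℂ A]
    [NormedAddCommGroup X] [NormedSpace ℂ X] (σ : BanachBimodule A X)
    (D : A →L[ℂ] (X →L[ℂ] ℂ)) : Prop :=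
  ∀ (a b : A) (x : X), D (a * b) x = D b (σ.R a x) + D a (σ.L b x)

/-- `D` is inner: `D a = a·f − f·a` for some `f ∈ X*`. -/
def IsInnerDualDerivation {A X : Type*} [NonUnitalNormedRing A] [NormedSpace ℂ A]
    [NormedAddCommGroup X] [NormedSpace ℂ X] (σ : BanachBimodule A X)
    (D : A →L[ℂ] (X →L[ℂ] ℂ)) : Prop :=
  ∃ f : X →L[ℂ] ℂ, ∀ (a : A) (x : X), D a x = f (σ.R a x) - f (σ.L a x)

/-- A Banach algebra is amenable if every continuous derivation into every dual
Banach bimodule is inner. -/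
def Amenable (A : Type*) [NonUnitalNormedRing A] [NormedSpace ℂ A] : Prop :=
  ∀ (X : Type) (_ : NormedAddCommGroup X) (_ : NormedSpace ℂ X) (_ : CompleteSpace X)
    (σ : BanachBimodule A X) (D : A →L[ℂ] (X →L[ℂ] ℂ)),
    IsDualDerivation σ D → IsInnerDualDerivation σ D

/-- Weak amenability: every continuous derivation `D : A → A*` into the dual
bimodule (`(a·f)(x) = f(xa)`, `(f·a)(x) = f(ax)`) is inner. -/
def WeaklyAmenable (A : Type*) [NonUnitalNormedRing A] [NormedSpace ℂ A] : Prop :=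
  ∀ D : A →L[ℂ] (A →L[ℂ] ℂ),
    (∀ a b x : A, D (a * b) x = D b (x * a) + D a (b * x)) →
    ∃ f : A →L[ℂ] ℂ, ∀ a x : A, D a x = f (x * a) - f (a * x)

/-- A bounded net in a normed space. -/
structure BddNet (X : Type*) [Norm X] where
  ι : Type
  [dir : SemilatticeSup ι]
  [ne : Nonempty ι]
  z : ι → X
  C : ℝ
  bdd : ∀ i, ‖z i‖ ≤ C

/-- The `atTop` filter of the (directed) index of a bounded net. -/
def BddNet.filter {X : Type*} [Norm X] (S : BddNet X) : Filter S.ι :=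
  letI := S.dir; Filter.atTop

/-- The bounded net `S` is a two-sided bounded approximate identity for `A`. -/
def IsBAI {A : Type*} [NonUnitalNormedRing A] (S : BddNet A) : Prop :=
  ∀ a : A, Tendsto (fun i => a * S.z i) S.filter (nhds a) ∧
           Tendsto (fun i => S.z i * a) S.filter (nhds a)

/-- `A` has a (two-sided) bounded approximate identity. -/
def HasBAI (A : Type*) [NonUnitalNormedRing A] : Prop := ∃ S : BddNet A, IsBAI S

/-- `T`, together with the continuous bilinear map `ι`, is (a realization of) the
projective tensor product `A ⊗̂ B` of the Banach algebras `A` and `B`: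
`ι` is multiplicative ((a⊗b)(c⊗d) = ac⊗bd), satisfies the cross-norm estimate,
has dense linear span, and has the universal (norm-decreasing lifting) property
of the projective tensor norm. -/
structure IsProjTensorProduct (A B T : Type*)
    [NonUnitalNormedRing A] [NormedSpace ℂ A] [NonUnitalNormedRing B] [NormedSpace ℂ B]
    [NonUnitalNormedRing T] [NormedSpace ℂ T] [CompleteSpace T] where
  ι : A →L[ℂ] B →L[ℂ] T
  norm_ι : ∀ a b, ‖ι a b‖ ≤ ‖a‖ * ‖b‖
  ι_mul : ∀ (a c : A) (b d : B), ι a b * ι c d = ι (a * c) (b * d)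
  dense_span : Dense (Submodule.span ℂ (Set.range fun p : A × B => ι p.1 p.2) : Set T)
  lift : ∀ (E : Type) (_ : NormedAddCommGroup E) (_ : NormedSpace ℂ E) (_ : CompleteSpace E)
    (φ : A →L[ℂ] B →L[ℂ] E), ∃ Φ : T →L[ℂ] E, (∀ a b, Φ (ι a b) = φ a b) ∧ ‖Φ‖ ≤ ‖φ‖



section helpers

/-- Weak-star cluster points along an ultrafilter. -/
lemma exists_wlim {X I : Type*} [NormedAddCommGroup X] [NormedSpace ℂ X] (U : Ultrafilter I)
    (φ : I → (X →L[ℂ] ℂ)) (C : ℝ) (h : ∀ i, ‖φ i‖ ≤ C) :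
    ∃ g : X →L[ℂ] ℂ, ∀ x, Tendsto (fun i => φ i x) U (𝓝 (g x)) := by
  have hc := WeakDual.isCompact_closedBall (𝕜 := ℂ) (E := X) 0 C
  let ψ : I → WeakDual ℂ X := fun i => StrongDual.toWeakDual (φ i)
  obtain ⟨g, -, hg⟩ := hc.ultrafilter_le_nhds (U.map ψ) (by
    rw [le_principal_iff]
    refine Filter.mem_map.2 (Filter.univ_mem' fun i => ?_)
    simpa [ψ] using h i)
  refine ⟨WeakDual.toStrongDual g, fun x => ?_⟩
  have h1 : Tendsto ψ U (𝓝 g) := hg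
  exact ((WeakDual.eval_continuous x).tendsto g).comp h1

variable {A T : Type*} [NonUnitalNormedRing A] [NormedSpace ℂ A]

lemma annihilated_inner {X : Type*} [NormedAddCommGroup X] [NormedSpace ℂ X]
    (S : BddNet A) (hS : IsBAI S) (U : Ultrafilter S.ι) (hU : (U : Filter S.ι) ≤ S.filter)
    (σ : BanachBimodule A X) (D : A →L[ℂ] (X →L[ℂ] ℂ)) (hD : IsDualDerivation σ D)
    (h0 : ∀ (c d d' : A) (x : X), D d (σ.L d' (σ.R c x)) = 0) :
    IsInnerDualDerivation σ D := by
  have hr : ∀ a, Tendsto (fun i => a * S.z i) U (𝓝 a) := fun a => (hS a).1.mono_left hU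
  have hl : ∀ a, Tendsto (fun i => S.z i * a) U (𝓝 a) := fun a => (hS a).2.mono_left hU
  have ev : ∀ {φ : A →L[ℂ] (X →L[ℂ] ℂ)} {u : S.ι → A} {a : A} (x : X), Tendsto u U (𝓝 a) →
      Tendsto (fun i => φ (u i) x) U (𝓝 (φ a x)) := fun {φ u a} x h =>
    (((φ.flip x).continuous.tendsto a).comp h)
  have evL : ∀ {φ : X →L[ℂ] ℂ} {u : S.ι → A} {a : A} (x : X), Tendsto u U (𝓝 a) →
      Tendsto (fun i => φ (σ.L (u i) x)) U (𝓝 (φ (σ.L a x))) := fun {φ u a} x h =>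
    (((φ.comp (σ.L.flip x)).continuous.tendsto a).comp h)
  have evR : ∀ {φ : X →L[ℂ] ℂ} {u : S.ι → A} {a : A} (x : X), Tendsto u U (𝓝 a) →
      Tendsto (fun i => φ (σ.R (u i) x)) U (𝓝 (φ (σ.R a x))) := fun {φ u a} x h =>
    (((φ.comp (σ.R.flip x)).continuous.tendsto a).comp h)
  have Lm : ∀ a b x, σ.L (a * b) x = σ.L a (σ.L b x) := fun a b x => by rw [σ.L_mul]; rfl
  have Rm : ∀ a b x, σ.R (a * b) x = σ.R b (σ.R a x) := fun a b x => by rw [σ.R_mul]; rfl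
  obtain ⟨g, hg⟩ := exists_wlim U (fun i => D (S.z i)) (‖D‖ * S.C) fun i =>
    (D.le_opNorm _).trans (mul_le_mul_of_nonneg_left (S.bdd i) (norm_nonneg _))
  have h1 : ∀ c a x, D c (σ.L a x) = g (σ.L c (σ.L a x)) := by
    intro c a x
    refine tendsto_nhds_unique (ev (σ.L a x) (hl c)) ?_
    have : ∀ i, D (S.z i * c) (σ.L a x) = D (S.z i) (σ.L c (σ.L a x)) := fun i => by
      rw [hD, σ.LR_comm, h0, zero_add]
    simp only [this]
    exact hg _
  have h2 : ∀ c x, D c x = g (σ.R c x) + g (σ.L c x) := by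
    intro c x
    refine tendsto_nhds_unique (ev x (hr c)) ?_
    have : ∀ i, D (c * S.z i) x = D (S.z i) (σ.R c x) + g (σ.L (c * S.z i) x) := fun i => by
      rw [hD, h1, Lm]
    simp only [this]
    exact (hg _).add (evL x (hr c))
  have h3 : ∀ c a x, D c (σ.R a x) = g (σ.R c (σ.R a x)) := by
    intro c a x
    refine tendsto_nhds_unique (ev (σ.R a x) (hr c)) ?_
    have : ∀ i, D (c * S.z i) (σ.R a x) = D (S.z i) (σ.R c (σ.R a x)) := fun i => by
      rw [hD, h0, add_zero]
    simp only [this]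
    exact hg _
  have h4 : ∀ c a x, g (σ.L c (σ.R a x)) = 0 := by
    intro c a x
    have := h2 c (σ.R a x)
    rw [h3] at this
    simpa using this
  obtain ⟨p, hp⟩ := exists_wlim U (fun i => g.comp (σ.R (S.z i))) (‖g‖ * (‖σ.R‖ * S.C)) fun i =>
    (g.opNorm_comp_le _).trans (mul_le_mul_of_nonneg_left ((σ.R.le_opNorm _).trans
      (mul_le_mul_of_nonneg_left (S.bdd i) (norm_nonneg _))) (norm_nonneg _))
  obtain ⟨q, hq⟩ := exists_wlim U (fun i => g.comp (σ.L (S.z i))) (‖g‖ * (‖σ.L‖ * S.C)) fun i =>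
    (g.opNorm_comp_le _).trans (mul_le_mul_of_nonneg_left ((σ.L.le_opNorm _).trans
      (mul_le_mul_of_nonneg_left (S.bdd i) (norm_nonneg _))) (norm_nonneg _))
  have pR : ∀ c x, p (σ.R c x) = g (σ.R c x) := fun c x => by
    refine tendsto_nhds_unique (hp _) ?_
    simp only [ContinuousLinearMap.comp_apply, ← Rm]
    exact evR x (hr c)
  have pL : ∀ c x, p (σ.L c x) = 0 := fun c x => by
    refine tendsto_nhds_unique (hp _) ?_
    simp only [ContinuousLinearMap.comp_apply, σ.LR_comm, h4]
    exact tendsto_const_nhds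
  have qR : ∀ c x, q (σ.R c x) = 0 := fun c x => by
    refine tendsto_nhds_unique (hq _) ?_
    simp only [ContinuousLinearMap.comp_apply, h4]
    exact tendsto_const_nhds
  have qL : ∀ c x, q (σ.L c x) = g (σ.L c x) := fun c x => by
    refine tendsto_nhds_unique (hq _) ?_
    simp only [ContinuousLinearMap.comp_apply, ← Lm]
    exact evL x (hl c)
  refine ⟨p - q, fun c x => ?_⟩
  simp only [ContinuousLinearMap.sub_apply, pR, pL, qR, qL, h2]
  ring

lemma inner_of_key {X : Type*} [NormedAddCommGroup X] [NormedSpace ℂ X]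
    (hA : HasBAI A)
    (σ : BanachBimodule A X) (D : A →L[ℂ] (X →L[ℂ] ℂ)) (hD : IsDualDerivation σ D)
    (Q : A →L[ℂ] (X →L[ℂ] ℂ))
    (hQ : ∀ (c a d : A) (x : X), D d (σ.R a (σ.R c x)) =
      Q a (σ.L d (σ.R c x)) - Q (c * a * d) x) :
    IsInnerDualDerivation σ D := by
  obtain ⟨S, hS⟩ := hA
  have hne : S.filter.NeBot := by
    letI := S.dir
    haveI := S.ne
    exact (inferInstance : (atTop : Filter S.ι).NeBot)
  let U : Ultrafilter S.ι := Ultrafilter.of S.filter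
  have hU : (U : Filter S.ι) ≤ S.filter := Ultrafilter.of_le _
  have hr : ∀ a, Tendsto (fun i => a * S.z i) U (𝓝 a) := fun a => (hS a).1.mono_left hU
  have Lm : ∀ a b x, σ.L (a * b) x = σ.L a (σ.L b x) := fun a b x => by rw [σ.L_mul]; rfl
  have Rm : ∀ a b x, σ.R (a * b) x = σ.R b (σ.R a x) := fun a b x => by rw [σ.R_mul]; rfl
  obtain ⟨f, hf⟩ := exists_wlim U (fun i => Q (S.z i)) (‖Q‖ * S.C) fun i =>
    (Q.le_opNorm _).trans (mul_le_mul_of_nonneg_left (S.bdd i) (norm_nonneg _))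
  have h1 : ∀ c d x, D d (σ.R c x) = f (σ.L d (σ.R c x)) - Q (c * d) x := by
    intro c d x
    have t1 : Tendsto (fun i => D d (σ.R (c * S.z i) x)) U (𝓝 (D d (σ.R c x))) :=
      (((D d).comp (σ.R.flip x)).continuous.tendsto c).comp (hr c)
    refine tendsto_nhds_unique t1 ?_
    simp only [Rm, hQ]
    refine (hf _).sub ?_
    have t2 : Tendsto (fun i => c * S.z i * d) U (𝓝 (c * d)) := (hr c).mul_const d
    exact (((Q.flip x).continuous.tendsto _).comp t2)
  let I : A →L[ℂ] (X →L[ℂ] ℂ) :=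
    (ContinuousLinearMap.compL ℂ X X ℂ f).comp σ.R - (ContinuousLinearMap.compL ℂ X X ℂ f).comp σ.L
  have hI : ∀ a x, I a x = f (σ.R a x) - f (σ.L a x) := fun a x => rfl
  have hder : IsDualDerivation σ (D + I) := by
    intro a b x
    simp only [ContinuousLinearMap.add_apply, hI, hD a b x, Lm, Rm, σ.LR_comm]
    ring
  obtain ⟨h, hh⟩ := annihilated_inner S hS U hU σ (D + I) hder (by
    intro c d d' x
    simp only [ContinuousLinearMap.add_apply, hI]
    have e1 := h1 c (d * d') x
    rw [hD] at e1
    have e2 := h1 (c * d) d' x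
    rw [Rm] at e2
    rw [← mul_assoc] at e1
    rw [Lm] at e1
    rw [σ.LR_comm]
    linear_combination e1 - e2)
  refine ⟨h - f, fun a x => ?_⟩
  have := hh a x
  simp only [ContinuousLinearMap.add_apply, hI] at this
  simp only [ContinuousLinearMap.sub_apply]
  linear_combination this

variable [NonUnitalNormedRing T] [NormedSpace ℂ T] [IsScalarTower ℂ T T] [SMulCommClass ℂ T T]
  [CompleteSpace T]

lemma proj_ext {B Y : Type*} [NonUnitalNormedRing B] [NormedSpace ℂ B]
    [NormedAddCommGroup Y] [NormedSpace ℂ Y]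
    (P : IsProjTensorProduct A B T) (F G : T →L[ℂ] Y)
    (h : ∀ a b, F (P.ι a b) = G (P.ι a b)) : F = G := by
  refine ContinuousLinearMap.ext_on P.dense_span ?_
  rintro _ ⟨p, rfl⟩
  exact h p.1 p.2

lemma proj_ext₂ {B Y : Type*} [NonUnitalNormedRing B] [NormedSpace ℂ B]
    [NormedAddCommGroup Y] [NormedSpace ℂ Y]
    (P : IsProjTensorProduct A B T) (F G : T →L[ℂ] T →L[ℂ] Y)
    (h : ∀ a b c d, F (P.ι a b) (P.ι c d) = G (P.ι a b) (P.ι c d)) (s t : T) :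
    F s t = G s t := by
  have : F = G := proj_ext P _ _ fun a b => proj_ext P _ _ fun c d => h a b c d
  rw [this]

/-- Amenability of `T` rephrased with operators on a space `V` (whose dual is the module). -/
lemma amenable_apply {B : Type*} [NonUnitalNormedRing B] [NormedSpace ℂ B]
    (P : IsProjTensorProduct A B T) (hT : Amenable T)
    (V : Type) [NormedAddCommGroup V] [NormedSpace ℂ V] [CompleteSpace V]
    (α β : A →L[ℂ] B →L[ℂ] V →L[ℂ] V) (δ : A →L[ℂ] B →L[ℂ] V)
    (hα : ∀ a b c d v, α (a * c) (b * d) v = α a b (α c d v))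
    (hβ : ∀ a b c d v, β (a * c) (b * d) v = β c d (β a b v))
    (hαβ : ∀ a b c d v, α a b (β c d v) = β c d (α a b v))
    (hδ : ∀ a b c d, δ (a * c) (b * d) = α a b (δ c d) + β c d (δ a b)) :
    ∃ f : (V →L[ℂ] ℂ) →L[ℂ] ℂ, ∀ a b (w : V →L[ℂ] ℂ),
      w (δ a b) = f (w.comp (α a b)) - f (w.comp (β a b)) := by
  obtain ⟨α', hα', -⟩ := P.lift (V →L[ℂ] V) _ _ inferInstance α
  obtain ⟨β', hβ', -⟩ := P.lift (V →L[ℂ] V) _ _ inferInstance β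
  obtain ⟨Δ, hΔ, -⟩ := P.lift V _ _ inferInstance δ
  let M := ContinuousLinearMap.mul ℂ T
  let K := ContinuousLinearMap.compL ℂ V V V
  have e1 : ∀ s t, α' (s * t) = (α' s).comp (α' t) :=
    proj_ext₂ P ((ContinuousLinearMap.compL ℂ T T _ α').comp M) (K.bilinearComp α' α')
      (by
        intro a b c d
        ext v : 1
        change α' (P.ι a b * P.ι c d) v = α' (P.ι a b) (α' (P.ι c d) v)
        rw [P.ι_mul, hα', hα', hα', hα])
  have e2 : ∀ s t, β' (s * t) = (β' t).comp (β' s) :=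
    proj_ext₂ P ((ContinuousLinearMap.compL ℂ T T _ β').comp M) (K.flip.bilinearComp β' β')
      (by
        intro a b c d
        ext v : 1
        change β' (P.ι a b * P.ι c d) v = β' (P.ι c d) (β' (P.ι a b) v)
        rw [P.ι_mul, hβ', hβ', hβ', hβ])
  have e3 : ∀ s t, (α' s).comp (β' t) = (β' t).comp (α' s) :=
    proj_ext₂ P (K.bilinearComp α' β') (K.flip.bilinearComp α' β')
      (by
        intro a b c d
        ext v : 1
        change α' (P.ι a b) (β' (P.ι c d) v) = β' (P.ι c d) (α' (P.ι a b) v)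
        rw [hα', hβ', hαβ])
  let N : (V →L[ℂ] V) →L[ℂ] V →L[ℂ] V := ContinuousLinearMap.id ℂ _
  have e4 : ∀ s t, Δ (s * t) = α' s (Δ t) + β' t (Δ s) :=
    proj_ext₂ P ((ContinuousLinearMap.compL ℂ T T _ Δ).comp M)
      (N.bilinearComp α' Δ + (N.bilinearComp β' Δ).flip)
      (by
        intro a b c d
        change Δ (P.ι a b * P.ι c d) = α' (P.ι a b) (Δ (P.ι c d)) + β' (P.ι c d) (Δ (P.ι a b))
        rw [P.ι_mul, hα', hβ', hΔ, hΔ, hΔ, hδ])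
  let J := (ContinuousLinearMap.compL ℂ V V ℂ).flip
  let τ : BanachBimodule T (V →L[ℂ] ℂ) :=
    { L := J.comp β'
      R := J.comp α'
      L_mul := fun s t => by
        ext w v
        change w (β' (s * t) v) = w (β' t (β' s v))
        rw [e2]; rfl
      R_mul := fun s t => by
        ext w v
        change w (α' (s * t) v) = w (α' s (α' t v))
        rw [e1]; rfl
      LR_comm := fun s t w => by
        ext v
        change w (β' s (α' t v)) = w (α' t (β' s v))
        have := DFunLike.congr_fun (e3 t s) v
        exact congrArg w this.symm }
  let E : T →L[ℂ] ((V →L[ℂ] ℂ) →L[ℂ] ℂ) := (ContinuousLinearMap.id ℂ (V →L[ℂ] ℂ)).flip.comp Δ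
  obtain ⟨f, hf⟩ := hT (V →L[ℂ] ℂ) _ _ inferInstance τ E (by
    intro s t w
    change w (Δ (s * t)) = w (α' s (Δ t)) + w (β' t (Δ s))
    rw [e4, map_add])
  refine ⟨f, fun a b w => ?_⟩
  have := hf (P.ι a b) w
  change w (Δ (P.ι a b)) = f (w.comp (α' (P.ι a b))) - f (w.comp (β' (P.ι a b))) at this
  rwa [hα', hβ', hΔ] at this

set_option maxHeartbeats 2000000 in
set_option synthInstance.maxHeartbeats 400000 in
set_option maxSynthPendingDepth 4 in
lemma key_aux (P : IsProjTensorProduct A Aᵐᵒᵖ T) (hT : Amenable T)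
    {X E : Type} [NormedAddCommGroup X] [NormedSpace ℂ X] [NormedRing E] [NormedAlgebra ℂ E]
    (σ : BanachBimodule A X) (D : A →L[ℂ] (X →L[ℂ] ℂ)) (hD : IsDualDerivation σ D)
    (val : E →L[ℂ] (X →L[ℂ] X)) (ρ : A →L[ℂ] E)
    (vm : ∀ (e e' : E) (x : X), val (e * e') x = val e (val e' x))
    (hρ : ∀ a x, val (ρ a) x = σ.R a x)
    (ρm : ∀ a b, ρ (a * b) = ρ b * ρ a)
    (hcomm : ∀ (e : E) (b : A) (x : X), val e (σ.L b x) = σ.L b (val e x)) :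
    ∃ Q : A →L[ℂ] (X →L[ℂ] ℂ), ∀ (c a d : A) (x : X), D d (σ.R a (σ.R c x)) =
      Q a (σ.L d (σ.R c x)) - Q (c * a * d) x := by
  have Lm : ∀ a b x, σ.L (a * b) x = σ.L a (σ.L b x) := fun a b x => by rw [σ.L_mul]; rfl
  have Rm : ∀ a b x, σ.R (a * b) x = σ.R b (σ.R a x) := fun a b x => by rw [σ.R_mul]; rfl
  let un : Aᵐᵒᵖ →L[ℂ] A := (MulOpposite.opContinuousLinearEquiv ℂ (M := A)).symm
  let α0 : (X →L[ℂ] X) →L[ℂ] ((E →L[ℂ] X →L[ℂ] ℂ) →L[ℂ] (E →L[ℂ] X →L[ℂ] ℂ)) :=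
    (ContinuousLinearMap.compL ℂ E (X →L[ℂ] ℂ) (X →L[ℂ] ℂ)).comp
      (ContinuousLinearMap.compL ℂ X X ℂ).flip
  let β0 : (E →L[ℂ] E) →L[ℂ] ((E →L[ℂ] X →L[ℂ] ℂ) →L[ℂ] (E →L[ℂ] X →L[ℂ] ℂ)) :=
    (ContinuousLinearMap.compL ℂ E E (X →L[ℂ] ℂ)).flip
  let α : A →L[ℂ] Aᵐᵒᵖ →L[ℂ] (E →L[ℂ] X →L[ℂ] ℂ) →L[ℂ] (E →L[ℂ] X →L[ℂ] ℂ) :=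
    (ContinuousLinearMap.compL ℂ Aᵐᵒᵖ (X →L[ℂ] X) ((E →L[ℂ] X →L[ℂ] ℂ) →L[ℂ] (E →L[ℂ] X →L[ℂ] ℂ)) α0).comp
      ((ContinuousLinearMap.compL ℂ X X X).flip.bilinearComp σ.R (σ.L.comp un))
  let β : A →L[ℂ] Aᵐᵒᵖ →L[ℂ] (E →L[ℂ] X →L[ℂ] ℂ) →L[ℂ] (E →L[ℂ] X →L[ℂ] ℂ) :=
    (ContinuousLinearMap.compL ℂ Aᵐᵒᵖ (E →L[ℂ] E) ((E →L[ℂ] X →L[ℂ] ℂ) →L[ℂ] (E →L[ℂ] X →L[ℂ] ℂ)) β0).comp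
      ((ContinuousLinearMap.mulLeftRight ℂ E).flip.bilinearComp ρ (ρ.comp un))
  let cmap : A →L[ℂ] (E →L[ℂ] (X →L[ℂ] X)) :=
    ((ContinuousLinearMap.compL ℂ E (X →L[ℂ] X) (X →L[ℂ] X)).flip val).comp
      ((ContinuousLinearMap.compL ℂ X X X).flip.comp σ.R)
  let dmap : Aᵐᵒᵖ →L[ℂ] ((X →L[ℂ] X) →L[ℂ] (X →L[ℂ] ℂ)) :=
    (ContinuousLinearMap.compL ℂ X X ℂ).comp (D.comp un)
  let δ : A →L[ℂ] Aᵐᵒᵖ →L[ℂ] (E →L[ℂ] X →L[ℂ] ℂ) :=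
    (ContinuousLinearMap.compL ℂ E (X →L[ℂ] X) (X →L[ℂ] ℂ)).flip.bilinearComp cmap dmap
  have hα : ∀ c d (v : (E →L[ℂ] X →L[ℂ] ℂ)) e x, α c d v e x = v e (σ.L d.unop (σ.R c x)) := fun c d v e x => rfl
  have hβ : ∀ c d (v : (E →L[ℂ] X →L[ℂ] ℂ)) e x, β c d v e x = v (ρ d.unop * e * ρ c) x := fun c d v e x => rfl
  have hδ : ∀ c d e x, δ c d e x = D d.unop (val e (σ.R c x)) := fun c d e x => rfl
  obtain ⟨f, hf⟩ := amenable_apply P hT (E →L[ℂ] X →L[ℂ] ℂ) α β δ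
    (by
      intro a b c d v
      ext e x
      simp only [hα, MulOpposite.unop_mul, Lm, Rm, σ.LR_comm])
    (by
      intro a b c d v
      ext e x
      simp only [hβ, MulOpposite.unop_mul, ρm, mul_assoc])
    (by
      intro a b c d v
      ext e x
      simp only [hα, hβ])
    (by
      intro a b c d
      ext e x
      simp only [ContinuousLinearMap.add_apply, hα, hβ, hδ, MulOpposite.unop_mul, Rm]
      rw [hD, σ.LR_comm, hcomm, add_comm, vm, vm, hρ, hρ])
  let ev : E →L[ℂ] X →L[ℂ] ((E →L[ℂ] X →L[ℂ] ℂ) →L[ℂ] ℂ) :=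
    (ContinuousLinearMap.compL ℂ (E →L[ℂ] X →L[ℂ] ℂ) (X →L[ℂ] ℂ) ℂ).flip.bilinearComp
      (ContinuousLinearMap.id ℂ (E →L[ℂ] X →L[ℂ] ℂ)).flip (ContinuousLinearMap.id ℂ (X →L[ℂ] ℂ)).flip
  have hev : ∀ e x v, ev e x v = v e x := fun e x v => rfl
  let Q : A →L[ℂ] (X →L[ℂ] ℂ) :=
    (ContinuousLinearMap.compL ℂ X ((E →L[ℂ] X →L[ℂ] ℂ) →L[ℂ] ℂ) ℂ f).comp (ev.comp ρ)
  refine ⟨Q, fun c a d x => ?_⟩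
  have := hf c (op d) (ev (ρ a) x)
  have e1 : (ev (ρ a) x).comp (α c (op d)) = ev (ρ a) (σ.L d (σ.R c x)) := rfl
  have e2 : (ev (ρ a) x).comp (β c (op d)) = ev (ρ (c * a * d)) x := by
    rw [ρm, ρm, ← mul_assoc]; rfl
  rw [e1, e2, hev, hδ, hρ] at this
  exact this

lemma key_exists (P : IsProjTensorProduct A Aᵐᵒᵖ T) (hT : Amenable T)
    {X : Type} [NormedAddCommGroup X] [NormedSpace ℂ X]
    (σ : BanachBimodule A X) (D : A →L[ℂ] (X →L[ℂ] ℂ)) (hD : IsDualDerivation σ D) :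
    ∃ Q : A →L[ℂ] (X →L[ℂ] ℂ), ∀ (c a d : A) (x : X), D d (σ.R a (σ.R c x)) =
      Q a (σ.L d (σ.R c x)) - Q (c * a * d) x := by
  let E0 : Subalgebra ℂ (X →L[ℂ] X) := Subalgebra.centralizer ℂ (Set.range σ.L)
  have hE0 : ∀ a, σ.R a ∈ E0 := by
    intro a
    rw [Subalgebra.mem_centralizer_iff]
    rintro _ ⟨b, rfl⟩
    ext x
    exact (σ.LR_comm b a x).symm
  have hcomm : ∀ (e : E0) (b : A) (x : X),
      (e : X →L[ℂ] X) (σ.L b x) = σ.L b ((e : X →L[ℂ] X) x) := by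
    intro e b x
    have := (Subalgebra.mem_centralizer_iff ℂ).1 e.2 (σ.L b) ⟨b, rfl⟩
    exact (DFunLike.congr_fun this x).symm
  let ρ : A →L[ℂ] E0 := σ.R.codRestrict (Subalgebra.toSubmodule E0) hE0
  have hρ : ∀ a x, (ρ a : X →L[ℂ] X) x = σ.R a x := fun a x => rfl
  have Rm : ∀ a b x, σ.R (a * b) x = σ.R b (σ.R a x) := fun a b x => by rw [σ.R_mul]; rfl
  have ρm : ∀ a b, ρ (a * b) = ρ b * ρ a := by
    intro a b
    apply Subtype.ext
    ext x
    exact Rm a b x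
  exact key_aux P hT σ D hD (Subalgebra.toSubmodule E0).subtypeL ρ (fun _ _ _ => rfl) hρ ρm hcomm

end helpers

/-- if `A` has a bounded approximate identity and `A ⊗̂ Aᵒᵖ` is amenable,
then `A` is amenable. -/
theorem stmt2 {A T : Type*} [NonUnitalNormedRing A] [NormedSpace ℂ A] [IsScalarTower ℂ A A] [SMulCommClass ℂ A A] [CompleteSpace A] [NonUnitalNormedRing T] [NormedSpace ℂ T] [IsScalarTower ℂ T T] [SMulCommClass ℂ T T] [CompleteSpace T]
    (P : IsProjTensorProduct A Aᵐᵒᵖ T)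
    (hA : HasBAI A) (hT : Amenable T) : Amenable A := by
  intro X _ _ _ σ D hD
  obtain ⟨Q, hQ⟩ := key_exists P hT σ D hD
  exact inner_of_key hA σ D hD Q hQ
end

section
/- Let A be a Banach algebra such that A ⊗̂ A^{op} is amenable, and suppose that each of the topologies on A induced by the seminorm families ρ_a(b) = ‖ab‖ and γ_a(b) = ‖ba‖ (for a ∈ A) is stronger than the weak topology on A. Then A is amenable. -/
open Filter Topology MulOpposite

set_option synthInstance.maxHeartbeats 400000 in
set_option maxHeartbeats 4000000 in
set_option maxSynthPendingDepth 6 in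
open ContinuousLinearMap in
/-- Lifting bimodule data over elementary tensors to `T`, and using amenability of `T`. -/
theorem key_lemma {A B T : Type*}
    [NonUnitalNormedRing A] [NormedSpace ℂ A] [NonUnitalNormedRing B] [NormedSpace ℂ B]
    [NonUnitalNormedRing T] [NormedSpace ℂ T] [IsScalarTower ℂ T T] [SMulCommClass ℂ T T]
    [CompleteSpace T]
    (P : IsProjTensorProduct A B T) (hT : Amenable T)
    (W : Type) [NormedAddCommGroup W] [NormedSpace ℂ W] [CompleteSpace W]
    (l r : A →L[ℂ] B →L[ℂ] (W →L[ℂ] W)) (Δ : A →L[ℂ] B →L[ℂ] W)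
    (hl : ∀ a a' b b', l (a * a') (b * b') = (l a b).comp (l a' b'))
    (hr : ∀ a a' b b', r (a * a') (b * b') = (r a' b').comp (r a b))
    (hlr : ∀ a a' b b', (l a b).comp (r a' b') = (r a' b').comp (l a b))
    (hΔ : ∀ a a' b b', Δ (a * a') (b * b') = l a b (Δ a' b') + r a' b' (Δ a b)) :
    ∃ Λ : (W →L[ℂ] ℂ) →L[ℂ] ℂ, ∀ a b (ζ : W →L[ℂ] ℂ),
      ζ (Δ a b) = Λ (ζ.comp (l a b)) - Λ (ζ.comp (r a b)) := by
  obtain ⟨lT, hlT, -⟩ := P.lift (W →L[ℂ] W) _ _ inferInstance l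
  obtain ⟨rT, hrT, -⟩ := P.lift (W →L[ℂ] W) _ _ inferInstance r
  obtain ⟨dT, hdT, -⟩ := P.lift W _ _ inferInstance Δ
  -- two continuous bilinear maps on `T` which agree on elementary tensors agree
  have ext2 : ∀ {G : Type} [NormedAddCommGroup G] [NormedSpace ℂ G]
      (f g : T →L[ℂ] T →L[ℂ] G),
      (∀ a b a' b', f (P.ι a b) (P.ι a' b') = g (P.ι a b) (P.ι a' b')) → f = g := by
    intro G _ _ f g h
    refine ContinuousLinearMap.ext_on P.dense_span ?_
    rintro _ ⟨⟨a, b⟩, rfl⟩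
    refine ContinuousLinearMap.ext_on P.dense_span ?_
    rintro _ ⟨⟨a', b'⟩, rfl⟩
    exact h a b a' b'
  have hlm : ∀ s t, lT (s * t) = (lT s).comp (lT t) := by
    intro s t
    have := ext2 ((compL ℂ T T (W →L[ℂ] W) lT).comp (ContinuousLinearMap.mul ℂ T))
      ((compL ℂ W W W).bilinearComp lT lT) (by
        intro a b a' b'
        simp [P.ι_mul, hlT, hl])
    simpa using! congrArg (fun f => f s t) this
  have hrm : ∀ s t, rT (s * t) = (rT t).comp (rT s) := by
    intro s t
    have := ext2 ((compL ℂ T T (W →L[ℂ] W) rT).comp (ContinuousLinearMap.mul ℂ T))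
      ((compL ℂ W W W).flip.bilinearComp rT rT) (by
        intro a b a' b'
        simp [P.ι_mul, hrT, hr])
    simpa using! congrArg (fun f => f s t) this
  have hlrm : ∀ s t, (lT s).comp (rT t) = (rT t).comp (lT s) := by
    intro s t
    have := ext2 ((compL ℂ W W W).bilinearComp lT rT)
      ((compL ℂ W W W).flip.bilinearComp lT rT) (by
        intro a b a' b'
        simp [hlT, hrT, hlr])
    simpa using! congrArg (fun f => f s t) this
  have hdm : ∀ s t, dT (s * t) = lT s (dT t) + rT t (dT s) := by
    intro s t
    have := ext2 ((compL ℂ T T W dT).comp (ContinuousLinearMap.mul ℂ T))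
      ((ContinuousLinearMap.id ℂ (W →L[ℂ] W)).bilinearComp lT dT
        + ((ContinuousLinearMap.id ℂ (W →L[ℂ] W)).bilinearComp rT dT).flip) (by
        intro a b a' b'
        simp [P.ι_mul, hlT, hrT, hdT, hΔ])
    simpa using! congrArg (fun f => f s t) this
  let pre : (W →L[ℂ] W) →L[ℂ] (W →L[ℂ] ℂ) →L[ℂ] (W →L[ℂ] ℂ) := (compL ℂ W W ℂ).flip
  let σ : BanachBimodule T (W →L[ℂ] ℂ) :=
    { L := pre.comp rT
      R := pre.comp lT
      L_mul := by
        intro a b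
        ext z w
        simp [pre, hrm]
      R_mul := by
        intro a b
        ext z w
        simp [pre, hlm]
      LR_comm := by
        intro a b z
        ext w
        have := congrArg (fun f => z (f w)) (hlrm b a)
        simpa [pre] using this.symm }
  obtain ⟨Λ, hΛ⟩ := hT (W →L[ℂ] ℂ) _ _ inferInstance σ
    ((ContinuousLinearMap.id ℂ (W →L[ℂ] ℂ)).flip.comp dT) (by
      intro s t z
      simp [σ, pre, hdm])
  refine ⟨Λ, fun a b ζ => ?_⟩
  have := hΛ (P.ι a b) ζ
  simpa [σ, pre, hdT, hlT, hrT] using this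

set_option synthInstance.maxHeartbeats 400000 in
set_option maxHeartbeats 4000000 in
set_option maxSynthPendingDepth 6 in
open ContinuousLinearMap in
/-- The step lemma: a derivation of `A` is tensored with a bimodule `Y` of functionals. -/
theorem step_lemma {A T : Type*} [NonUnitalNormedRing A] [NormedSpace ℂ A]
    [IsScalarTower ℂ A A] [SMulCommClass ℂ A A]
    [NonUnitalNormedRing T] [NormedSpace ℂ T] [IsScalarTower ℂ T T] [SMulCommClass ℂ T T]
    [CompleteSpace T]
    (P : IsProjTensorProduct A Aᵐᵒᵖ T) (hT : Amenable T)
    (X : Type) [NormedAddCommGroup X] [NormedSpace ℂ X]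
    (σ : BanachBimodule A X) (D : A →L[ℂ] (X →L[ℂ] ℂ)) (hD : IsDualDerivation σ D)
    (Y : Type) [NormedAddCommGroup Y] [NormedSpace ℂ Y]
    (la ra : A →L[ℂ] Y →L[ℂ] Y) (ev : Y →L[ℂ] A →L[ℂ] ℂ)
    (hinj : ∀ y y', (∀ c, ev y c = ev y' c) → y = y')
    (hla : ∀ a y c, ev (la a y) c = ev y (c * a))
    (hra : ∀ a y c, ev (ra a y) c = ev y (a * c)) :
    ∃ F : X →L[ℂ] Y →L[ℂ] ℂ, ∀ a b x y,
      D a x * ev y b = F (σ.R a x) (la b y) - F (σ.L a x) (ra b y) := by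
  have hla_mul : ∀ a b y, la (a * b) y = la a (la b y) := by
    intro a b y
    apply hinj
    intro c
    simp [hla, mul_assoc]
  have hra_mul : ∀ a b y, ra (a * b) y = ra b (ra a y) := by
    intro a b y
    apply hinj
    intro c
    simp [hra, mul_assoc]
  have hcomm : ∀ a b y, ra b (la a y) = la a (ra b y) := by
    intro a b y
    apply hinj
    intro c
    simp [hra, hla, mul_assoc]
  let op' : Aᵐᵒᵖ →L[ℂ] A := ((opContinuousLinearEquiv ℂ (M := A)).symm : Aᵐᵒᵖ →L[ℂ] A)
  have hop : ∀ b, op' b = unop b := fun b => rfl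
  let pre : (X →L[ℂ] X) →L[ℂ] (X →L[ℂ] Y →L[ℂ] ℂ) →L[ℂ] (X →L[ℂ] Y →L[ℂ] ℂ) := (compL ℂ X X (Y →L[ℂ] ℂ)).flip
  let post : (Y →L[ℂ] Y) →L[ℂ] (X →L[ℂ] Y →L[ℂ] ℂ) →L[ℂ] (X →L[ℂ] Y →L[ℂ] ℂ) :=
    (compL ℂ X (Y →L[ℂ] ℂ) (Y →L[ℂ] ℂ)).comp (compL ℂ Y Y ℂ).flip
  have hpre : ∀ p w x y, pre p w x y = w (p x) y := fun p w x y => rfl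
  have hpost : ∀ p w x y, post p w x y = w x (p y) := fun p w x y => rfl
  let l : A →L[ℂ] Aᵐᵒᵖ →L[ℂ] ((X →L[ℂ] Y →L[ℂ] ℂ) →L[ℂ] (X →L[ℂ] Y →L[ℂ] ℂ)) :=
    (compL ℂ (X →L[ℂ] Y →L[ℂ] ℂ) (X →L[ℂ] Y →L[ℂ] ℂ) (X →L[ℂ] Y →L[ℂ] ℂ)).bilinearComp (pre.comp σ.R) (post.comp (la.comp op'))
  let r : A →L[ℂ] Aᵐᵒᵖ →L[ℂ] ((X →L[ℂ] Y →L[ℂ] ℂ) →L[ℂ] (X →L[ℂ] Y →L[ℂ] ℂ)) :=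
    (compL ℂ (X →L[ℂ] Y →L[ℂ] ℂ) (X →L[ℂ] Y →L[ℂ] ℂ) (X →L[ℂ] Y →L[ℂ] ℂ)).bilinearComp (pre.comp σ.L) (post.comp (ra.comp op'))
  have hl : ∀ a b w x y, l a b w x y = w (σ.R a x) (la (unop b) y) := fun _ _ _ _ _ => rfl
  have hr : ∀ a b w x y, r a b w x y = w (σ.L a x) (ra (unop b) y) := fun _ _ _ _ _ => rfl
  let Δ : A →L[ℂ] Aᵐᵒᵖ →L[ℂ] (X →L[ℂ] Y →L[ℂ] ℂ) :=
    (smulRightL ℂ X (Y →L[ℂ] ℂ)).bilinearComp D (ev.flip.comp op')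
  have hΔ : ∀ a b x y, Δ a b x y = D a x * ev y (unop b) := fun _ _ _ _ => rfl
  obtain ⟨Λ, hΛ⟩ := key_lemma P hT (X →L[ℂ] Y →L[ℂ] ℂ) l r Δ
    (by
      intro a a' b b'
      ext w x y
      rw [ContinuousLinearMap.comp_apply]
      simp only [hl, unop_mul, hla_mul, σ.R_mul, ContinuousLinearMap.comp_apply])
    (by
      intro a a' b b'
      ext w x y
      rw [ContinuousLinearMap.comp_apply]
      simp only [hr, unop_mul, hra_mul, σ.L_mul, ContinuousLinearMap.comp_apply])
    (by
      intro a a' b b'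
      ext w x y
      rw [ContinuousLinearMap.comp_apply, ContinuousLinearMap.comp_apply]
      simp only [hr, hl, hcomm, σ.LR_comm])
    (by
      intro a a' b b'
      ext x y
      rw [ContinuousLinearMap.add_apply, ContinuousLinearMap.add_apply]
      simp only [hr, hl, hΔ, unop_mul, hla, hra]
      rw [hD]
      ring)
  -- evaluation functionals
  let δ : X →L[ℂ] Y →L[ℂ] ((X →L[ℂ] Y →L[ℂ] ℂ) →L[ℂ] ℂ) :=
    ((compL ℂ (X →L[ℂ] Y →L[ℂ] ℂ) (Y →L[ℂ] ℂ) ℂ).flip.comp (ContinuousLinearMap.id ℂ (X →L[ℂ] Y →L[ℂ] ℂ)).flip).flip.comp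
      (ContinuousLinearMap.id ℂ (Y →L[ℂ] ℂ)).flip |>.flip
  have hδ : ∀ x y w, δ x y w = w x y := fun x y w => rfl
  refine ⟨(compL ℂ Y ((X →L[ℂ] Y →L[ℂ] ℂ) →L[ℂ] ℂ) ℂ Λ).comp δ, fun a b x y => ?_⟩
  have h := hΛ a (op b) (δ x y)
  have h1 : (δ x y).comp (l a (op b)) = δ (σ.R a x) (la b y) := by
    ext w; rfl
  have h2 : (δ x y).comp (r a (op b)) = δ (σ.L a x) (ra b y) := by
    ext w; rfl
  rw [h1, h2] at h
  exact h

set_option synthInstance.maxHeartbeats 400000 in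
set_option maxHeartbeats 4000000 in
set_option maxSynthPendingDepth 6 in
open ContinuousLinearMap in
/-- A small space of functionals: the annihilator of a two-sided ideal which is the
kernel of a linear map into a small space. -/
theorem exists_small_dual {A : Type*} [NonUnitalNormedRing A] [NormedSpace ℂ A]
    [IsScalarTower ℂ A A] [SMulCommClass ℂ A A] (E : Type) [AddCommGroup E] [Module ℂ E]
    (G : A →ₗ[ℂ] E) (hGl : ∀ a c, G c = 0 → G (a * c) = 0)
    (hGr : ∀ a c, G c = 0 → G (c * a) = 0) :
    ∃ (Y : Type) (_ : NormedAddCommGroup Y) (_ : NormedSpace ℂ Y)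
      (la ra : A →L[ℂ] Y →L[ℂ] Y) (ev : Y →L[ℂ] A →L[ℂ] ℂ),
      (∀ y y', (∀ c, ev y c = ev y' c) → y = y') ∧
      (∀ a y c, ev (la a y) c = ev y (c * a)) ∧
      (∀ a y c, ev (ra a y) c = ev y (a * c)) ∧
      (∀ y c, G c = 0 → ev y c = 0) ∧
      (∀ f : A →L[ℂ] ℂ, (∀ c, G c = 0 → f c = 0) → ∃ y, ∀ c, ev y c = f c) := by
  let N : Submodule ℂ (A →L[ℂ] ℂ) :=
    { carrier := {f | ∀ c, G c = 0 → f c = 0}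
      add_mem' := by
        intro f g hf hg c hc
        simp [hf c hc, hg c hc]
      zero_mem' := by
        intro c _
        simp
      smul_mem' := by
        intro k f hf c hc
        simp [hf c hc] }
  have hsmall : Small.{0} N := by
    classical
    let j : N → (E → ℂ) := fun f e => if h : ∃ c, G c = e then f.1 h.choose else 0
    have hj : ∀ (f : N) c, j f (G c) = f.1 c := by
      intro f c
      have h : ∃ c', G c' = G c := ⟨c, rfl⟩
      have h2 : G (h.choose - c) = 0 := by rw [map_sub, h.choose_spec, sub_self]
      have h3 := f.2 _ h2
      rw [map_sub, sub_eq_zero] at h3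
      simp only [j, dif_pos h]
      exact h3
    refine small_of_injective (f := j) ?_
    intro f g hfg
    apply Subtype.ext
    ext c
    rw [← hj, ← hj, hfg]
  let Y := Shrink.{0} N
  let e : Y ≃ₗᵢ[ℂ] N := { Shrink.linearEquiv ℂ N with norm_map' := fun y => rfl }
  have hel : ∀ a (f : N), (f : A →L[ℂ] ℂ).comp ((ContinuousLinearMap.mul ℂ A).flip a) ∈ N := by
    intro a f c hc
    exact f.2 _ (hGr a c hc)
  have her : ∀ a (f : N), (f : A →L[ℂ] ℂ).comp (ContinuousLinearMap.mul ℂ A a) ∈ N := by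
    intro a f c hc
    exact f.2 _ (hGl a c hc)
  let la0 : A →ₗ[ℂ] Y →ₗ[ℂ] Y := LinearMap.mk₂ ℂ (fun a y => e.symm ⟨_, hel a (e y)⟩)
    (by intro a a' y; apply e.injective; apply Subtype.ext; ext c; simp [mul_add])
    (by intro k a y; apply e.injective; apply Subtype.ext; ext c; simp)
    (by intro a y y'; apply e.injective; apply Subtype.ext; ext c; simp)
    (by intro k a y; apply e.injective; apply Subtype.ext; ext c; simp)
  let ra0 : A →ₗ[ℂ] Y →ₗ[ℂ] Y := LinearMap.mk₂ ℂ (fun a y => e.symm ⟨_, her a (e y)⟩)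
    (by intro a a' y; apply e.injective; apply Subtype.ext; ext c; simp [add_mul])
    (by intro k a y; apply e.injective; apply Subtype.ext; ext c; simp)
    (by intro a y y'; apply e.injective; apply Subtype.ext; ext c; simp)
    (by intro k a y; apply e.injective; apply Subtype.ext; ext c; simp)
  have hla0 : ∀ a y, ‖la0 a y‖ ≤ 1 * ‖a‖ * ‖y‖ := by
    intro a y
    have h1 : ‖la0 a y‖ = ‖((e y : N) : A →L[ℂ] ℂ).comp ((ContinuousLinearMap.mul ℂ A).flip a)‖ :=
      e.symm.norm_map _
    have h2 : ‖((e y : N) : A →L[ℂ] ℂ)‖ = ‖y‖ := e.norm_map y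
    rw [h1, one_mul, ← h2]
    refine ContinuousLinearMap.opNorm_le_bound _ (by positivity) fun c => ?_
    calc ‖((e y : N) : A →L[ℂ] ℂ) (c * a)‖ ≤ ‖((e y : N) : A →L[ℂ] ℂ)‖ * ‖c * a‖ := le_opNorm _ _
      _ ≤ ‖((e y : N) : A →L[ℂ] ℂ)‖ * (‖c‖ * ‖a‖) := by gcongr; exact norm_mul_le _ _
      _ = _ := by ring
  have hra0 : ∀ a y, ‖ra0 a y‖ ≤ 1 * ‖a‖ * ‖y‖ := by
    intro a y
    have h1 : ‖ra0 a y‖ = ‖((e y : N) : A →L[ℂ] ℂ).comp (ContinuousLinearMap.mul ℂ A a)‖ :=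
      e.symm.norm_map _
    have h2 : ‖((e y : N) : A →L[ℂ] ℂ)‖ = ‖y‖ := e.norm_map y
    rw [h1, one_mul, ← h2]
    refine ContinuousLinearMap.opNorm_le_bound _ (by positivity) fun c => ?_
    calc ‖((e y : N) : A →L[ℂ] ℂ) (a * c)‖ ≤ ‖((e y : N) : A →L[ℂ] ℂ)‖ * ‖a * c‖ := le_opNorm _ _
      _ ≤ ‖((e y : N) : A →L[ℂ] ℂ)‖ * (‖a‖ * ‖c‖) := by gcongr; exact norm_mul_le _ _
      _ = _ := by ring
  let ev : Y →L[ℂ] A →L[ℂ] ℂ := N.subtypeL.comp (e.toContinuousLinearEquiv : Y →L[ℂ] N)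
  have hev : ∀ y, ev y = ((e y : N) : A →L[ℂ] ℂ) := fun y => rfl
  refine ⟨Y, inferInstance, inferInstance, LinearMap.mkContinuous₂ la0 1 hla0,
    LinearMap.mkContinuous₂ ra0 1 hra0, ev, ?_, ?_, ?_, ?_, ?_⟩
  · intro y y' h
    apply e.injective
    apply Subtype.ext
    ext c
    exact h c
  · intro a y c
    simp [hev, la0]
  · intro a y c
    simp [hev, ra0]
  · intro y c hc
    exact (e y).2 c hc
  · intro f hf
    refine ⟨e.symm ⟨f, hf⟩, fun c => ?_⟩
    simp [hev]

/-- if `A ⊗̂ Aᵒᵖ` is amenable and both the topology of the seminorms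
`ρ_a(b) = ‖ab‖` and that of `γ_a(b) = ‖ba‖` are stronger (finer) than the weak
topology on `A`, then `A` is amenable. -/
theorem stmt5 {A T : Type*} [NonUnitalNormedRing A] [NormedSpace ℂ A] [IsScalarTower ℂ A A] [SMulCommClass ℂ A A] [CompleteSpace A] [NonUnitalNormedRing T] [NormedSpace ℂ T] [IsScalarTower ℂ T T] [SMulCommClass ℂ T T] [CompleteSpace T]
    (P : IsProjTensorProduct A Aᵐᵒᵖ T) (hT : Amenable T)
    (hρ : (SeminormFamily.moduleFilterBasis
        ((fun a : A => (normSeminorm ℂ A).comp (LinearMap.mulLeft ℂ a)) : SeminormFamily ℂ A A)).topology ≤ TopologicalSpace.induced (fun (a : A) (f : A →L[ℂ] ℂ) => f a) Pi.topologicalSpace)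
    (hγ : (SeminormFamily.moduleFilterBasis
        ((fun a : A => (normSeminorm ℂ A).comp (LinearMap.mulRight ℂ a)) : SeminormFamily ℂ A A)).topology ≤ TopologicalSpace.induced (fun (a : A) (f : A →L[ℂ] ℂ) => f a) Pi.topologicalSpace) :
    Amenable A := by
  intro X _ _ _ σ D hD
  -- the ideal `J` of elements invisible to the module and to the derivation
  let G : A →ₗ[ℂ] (X →L[ℂ] X) × (X →L[ℂ] X) × (X →L[ℂ] ℂ) :=
    (σ.L : A →ₗ[ℂ] _).prod ((σ.R : A →ₗ[ℂ] _).prod (D : A →ₗ[ℂ] _))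
  have hG : ∀ c, G c = 0 ↔ σ.L c = 0 ∧ σ.R c = 0 ∧ D c = 0 := by
    intro c
    simp [G, Prod.ext_iff]
  obtain ⟨Y, _, _, la, ra, ev, hinj, hla, hra, hvan, hlift⟩ :=
    exists_small_dual _ G
      (by
        intro a c hc
        rw [hG] at hc ⊢
        obtain ⟨h1, h2, h3⟩ := hc
        refine ⟨by simp [σ.L_mul, h1], by simp [σ.R_mul, h2], ?_⟩
        ext x
        rw [hD]
        simp [h1, h3])
      (by
        intro a c hc
        rw [hG] at hc ⊢
        obtain ⟨h1, h2, h3⟩ := hc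
        refine ⟨by simp [σ.L_mul, h1], by simp [σ.R_mul, h2], ?_⟩
        ext x
        rw [hD]
        simp [h2, h3])
  have hGl : ∀ a c, G c = 0 → ∀ y, ev y (a * c) = 0 := by
    intro a c hc y
    rw [← hra]
    exact hvan _ c hc
  have hGr : ∀ a c, G c = 0 → ∀ y, ev y (c * a) = 0 := by
    intro a c hc y
    rw [← hla]
    exact hvan _ c hc
  have hla_van : ∀ c, G c = 0 → ∀ y, la c y = 0 := by
    intro c hc y
    apply hinj
    intro d
    simp [hla, hGl d c hc]
  have hra_van : ∀ c, G c = 0 → ∀ y, ra c y = 0 := by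
    intro c hc y
    apply hinj
    intro d
    simp [hra, hGr d c hc]
  by_cases hY : ∀ y c, ev y c = 0
  · -- trivial case
    refine ⟨0, fun a x => ?_⟩
    obtain ⟨y, hy⟩ := hlift (D.flip x) (by
      intro c hc
      rw [hG] at hc
      simp [hc.2.2])
    have := hy a
    rw [hY] at this
    simpa using this.symm
  push Not at hY
  obtain ⟨y0, c0, hy0⟩ := hY
  -- one-sided units
  let τ : BanachBimodule A Y :=
    { L := 0
      R := ra
      L_mul := by intro a b; simp
      R_mul := by
        intro a b
        ext y
        apply hinj
        intro c
        simp [hra, mul_assoc]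
      LR_comm := by intro a b y; simp }
  obtain ⟨F0, hF0⟩ := step_lemma P hT Y τ ev.flip
    (by
      intro a b y
      simp [τ, hra]) Y la ra ev hinj hla hra
  have hF0' : ∀ a b x y, ev x a * ev y b = F0 (ra a x) (la b y) := by
    intro a b x y
    have := hF0 a b x y
    simpa [τ] using this
  obtain ⟨e1, he1⟩ : ∃ e1 : Y →L[ℂ] ℂ, ∀ a y, e1 (ra a y) = ev y a := by
    refine ⟨(ev y0 c0)⁻¹ • F0.flip (la c0 y0), fun a y => ?_⟩
    have := hF0' a c0 y y0
    simp only [_root_.smul_apply, ContinuousLinearMap.flip_apply, ← this, smul_eq_mul]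
    field_simp
  obtain ⟨e2, he2⟩ : ∃ e2 : Y →L[ℂ] ℂ, ∀ a y, e2 (la a y) = ev y a := by
    refine ⟨(ev y0 c0)⁻¹ • F0 (ra c0 y0), fun a y => ?_⟩
    have := hF0' c0 a y0 y
    simp only [_root_.smul_apply, ← this, smul_eq_mul]
    field_simp
  -- the two-sided unit, as a plain linear functional on the relevant elements
  have hh : ∀ y, ∃ h : Y, ∀ b, ev h b = e2 (ra b y) := by
    intro y
    obtain ⟨h, hh⟩ := hlift (e2.comp (ra.flip y)) (by
      intro c hc
      simp [hra_van c hc])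
    exact ⟨h, fun b => by simpa using hh b⟩
  choose H hH using hh
  let U : Y → ℂ := fun y => e1 y + e2 y - e1 (H y)
  have hHra : ∀ a y, H (ra a y) = ra a (H y) := by
    intro a y
    apply hinj
    intro b
    rw [hH, hra, hH]
    congr 1
    apply hinj
    intro c
    simp [hra, mul_assoc]
  have hHla : ∀ a y, H (la a y) = la a y := by
    intro a y
    apply hinj
    intro b
    have : ra b (la a y) = la a (ra b y) := by
      apply hinj
      intro c
      simp [hra, hla, mul_assoc]
    rw [hH, this, he2, hra, hla]
  have hU1 : ∀ a y, U (ra a y) = ev y a := by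
    intro a y
    simp only [U, hHra, he1, hH]
    ring
  have hU2 : ∀ a y, U (la a y) = ev y a := by
    intro a y
    simp only [U, hHla, he2]
    ring
  have hHlin : ∀ (k : ℂ) y y' y'', (∀ b, k * ev y b = ev y' b - ev y'' b) →
      k * U y = U y' - U y'' := by
    intro k y y' y'' h
    have h1 : k • y = y' - y'' := by
      apply hinj
      intro b
      simpa using h b
    have h2 : k • H y = H y' - H y'' := by
      apply hinj
      intro b
      simp only [map_smul, map_sub, _root_.smul_apply, _root_.sub_apply, hH]
      rw [← map_sub, ← map_sub, ← h1, map_smul, map_smul]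
    have e1y := congrArg e1 h1
    have e2y := congrArg e2 h1
    have e3y := congrArg e1 h2
    simp only [map_smul, map_sub, smul_eq_mul] at e1y e2y e3y
    simp only [U]
    linear_combination e1y + e2y - e3y
  -- a product on which some functional does not vanish
  obtain ⟨b1, hb1⟩ : ∃ b1, ev y0 (c0 * b1) ≠ 0 := by
    by_contra! hcon
    have : ra c0 y0 = 0 := by
      apply hinj
      intro c
      simp [hra, hcon]
    apply hy0
    rw [← he1, this, map_zero]
  obtain ⟨F, hF⟩ := step_lemma P hT X σ D hD Y la ra ev hinj hla hra
  let φ : Y := la b1 (ra c0 y0)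
  have hφ : φ = ra c0 (la b1 y0) := by
    apply hinj
    intro c
    simp [φ, hra, hla, mul_assoc]
  refine ⟨(ev y0 (c0 * b1))⁻¹ • F.flip φ, fun a x => ?_⟩
  have hmain : D a x * ev y0 (c0 * b1) = F (σ.R a x) φ - F (σ.L a x) φ := by
    -- u b = F (x a) (la b φ), with φ = ra c0 (la b1 y0)
    obtain ⟨u, hu⟩ := hlift ((F (σ.R a x)).comp (la.flip (ra c0 y0))) (by
      intro c hc
      simp [hla_van c hc])
    obtain ⟨v, hv⟩ := hlift ((F (σ.L a x)).comp (ra.flip (la b1 y0))) (by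
      intro c hc
      simp [hra_van c hc])
    have h1 := hHlin (D a x) φ (la b1 u) (ra c0 v) (by
      intro b
      rw [hF a b x φ, hla, hra, hu, hv]
      have e1' : la b φ = la (b * b1) (ra c0 y0) := by
        apply hinj
        intro c
        simp [φ, hra, hla, mul_assoc]
      have e2' : ra b φ = ra (c0 * b) (la b1 y0) := by
        apply hinj
        intro c
        simp [φ, hra, hla, mul_assoc]
      rw [e1', e2']
      rfl)
    rw [hU2 b1 u, hU1 c0 v, hu, hv] at h1
    have h2 : U φ = ev y0 (c0 * b1) := by
      rw [hφ, hU1, hla]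
    rw [h2] at h1
    rw [h1]
    have e3 : la b1 (ra c0 y0) = φ := rfl
    simp only [ContinuousLinearMap.comp_apply, ContinuousLinearMap.flip_apply]
    rw [← hφ]
  simp only [_root_.smul_apply, ContinuousLinearMap.flip_apply, smul_eq_mul]
  rw [← mul_sub, ← hmain]
  field_simp
end

section
/- Let A be a Banach algebra with a bounded approximate identity. If the projective tensor product A ⊗̂ A is amenable, then A ⊗̂ A^{op} is also amenable. -/
open Filter Topology MulOpposite

section analytic

variable {ι X E A : Type*} [NormedAddCommGroup X] [NormedSpace ℂ X]
  [NormedAddCommGroup E] [NormedSpace ℂ E] [NormedAddCommGroup A] [NormedSpace ℂ A]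

/-- pointwise convergence plus boundedness: evaluate along a convergent net. -/
lemma tendsto_apply_of_bdd {F : Filter ι} {S : ι → X →L[ℂ] E} {C : ℝ} (hS : ∀ i, ‖S i‖ ≤ C)
    {y : E} {x : X} (h : Tendsto (fun i => S i x) F (𝓝 y)) {z : ι → X}
    (hz : Tendsto z F (𝓝 x)) : Tendsto (fun i => S i (z i)) F (𝓝 y) := by
  have h0 : Tendsto (fun i => S i (z i - x)) F (𝓝 0) := by
    have h1 : Tendsto (fun i => C * ‖z i - x‖) F (𝓝 0) := by
      have := (tendsto_iff_norm_sub_tendsto_zero.1 hz).const_mul C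
      simpa using this
    exact squeeze_zero_norm (fun i => (S i).le_of_opNorm_le (hS i) _) h1
  have := h0.add h
  simpa using this

lemma isClosed_tendsto {F : Filter ι} {S : ι → X →L[ℂ] E} {C : ℝ} (hS : ∀ i, ‖S i‖ ≤ C)
    (G : X →L[ℂ] E) : IsClosed {x | Tendsto (fun i => S i x) F (𝓝 (G x))} := by
  rw [← isSeqClosed_iff_isClosed]
  intro xs x hx hxs
  simp only [Set.mem_ofPred_eq] at hx ⊢
  rw [Metric.tendsto_nhds]
  intro ε hε
  have hC : 0 < |C| + ‖G‖ + 1 := by positivity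
  obtain ⟨n, hn⟩ := ((Metric.tendsto_nhds.1 hxs) (ε / 2 / (|C| + ‖G‖ + 1)) (by positivity)).exists
  filter_upwards [(Metric.tendsto_nhds.1 (hx n)) (ε / 2) (by positivity)] with i hi
  rw [dist_eq_norm] at *
  have e : S i x - G x = (S i (xs n) - G (xs n)) - (S i (xs n - x)) + G (xs n - x) := by
    simp only [map_sub]; abel
  have h1 : ‖S i (xs n - x)‖ ≤ |C| * ‖xs n - x‖ :=
    (S i).le_of_opNorm_le ((hS i).trans (le_abs_self C)) _
  have h2 := G.le_opNorm (xs n - x)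
  rw [lt_div_iff₀ hC] at hn
  have h3 : ‖S i x - G x‖ ≤ ‖S i (xs n) - G (xs n)‖ + ‖S i (xs n - x)‖ + ‖G (xs n - x)‖ := by
    rw [e]; exact (norm_add_le _ _).trans (by gcongr; exact norm_sub_le _ _)
  nlinarith [norm_nonneg (xs n - x)]

/-- If `S i (w j)` converges for each `j` and `w j → x`, then `S i x` converges. -/
lemma exists_tendsto_of_approx [CompleteSpace E] {κ : Type*} {F : Filter ι} [F.NeBot]
    {F' : Filter κ} [F'.NeBot]
    {S : ι → X →L[ℂ] E} {C : ℝ} (hS : ∀ i, ‖S i‖ ≤ C) {w : κ → X} {x : X}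
    (hw : Tendsto w F' (𝓝 x)) (h : ∀ j, ∃ y, Tendsto (fun i => S i (w j)) F (𝓝 y)) :
    ∃ y, Tendsto (fun i => S i x) F (𝓝 y) := by
  suffices hc : Cauchy (map (fun i => S i x) F) from CompleteSpace.complete hc
  rw [Metric.cauchy_iff]
  refine ⟨inferInstance, fun ε hε => ?_⟩
  have hC : 0 < |C| + 1 := by positivity
  obtain ⟨n, hn⟩ := ((Metric.tendsto_nhds.1 hw) (ε / 4 / (|C| + 1)) (by positivity)).exists
  obtain ⟨y, hy⟩ := h n
  refine ⟨Metric.ball y (ε / 2), ?_, ?_⟩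
  · rw [mem_map]
    filter_upwards [(Metric.tendsto_nhds.1 hy) (ε / 4) (by positivity)] with i hi
    simp only [Set.mem_preimage, Metric.mem_ball]
    have h1 : dist (S i x) (S i (w n)) ≤ |C| * ‖w n - x‖ := by
      rw [dist_comm, dist_eq_norm, ← map_sub]
      exact (S i).le_of_opNorm_le ((hS i).trans (le_abs_self C)) _
    rw [dist_eq_norm, lt_div_iff₀ hC] at hn
    have := dist_triangle (S i x) (S i (w n)) y
    nlinarith [norm_nonneg (w n - x)]
  · intro a ha b hb
    have := dist_triangle_right a b y
    simp only [Metric.mem_ball] at ha hb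
    linarith

lemma exists_bilin_limit {F : Filter ι} [F.NeBot] {S : ι → A →L[ℂ] X →L[ℂ] E} {C : ℝ}
    (hS : ∀ i, ‖S i‖ ≤ C) (h : ∀ a x, ∃ y, Tendsto (fun i => S i a x) F (𝓝 y)) :
    ∃ G : A →L[ℂ] X →L[ℂ] E, ∀ a x, Tendsto (fun i => S i a x) F (𝓝 (G a x)) := by
  choose g hg using h
  refine ⟨LinearMap.mkContinuous₂ (LinearMap.mk₂ ℂ g ?_ ?_ ?_ ?_) C ?_, ?_⟩
  · intro a b x
    refine tendsto_nhds_unique (hg _ _) ?_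
    simpa using (hg a x).add (hg b x)
  · intro c a x
    refine tendsto_nhds_unique (hg _ _) ?_
    simpa using (hg a x).const_smul c
  · intro a x y
    refine tendsto_nhds_unique (hg _ _) ?_
    simpa using (hg a x).add (hg a y)
  · intro c a x
    refine tendsto_nhds_unique (hg _ _) ?_
    simpa using (hg a x).const_smul c
  · intro a x
    refine le_of_tendsto (hg a x).norm (Eventually.of_forall fun i => ?_)
    exact (S i).le_of_opNorm₂_le_of_le (hS i) le_rfl le_rfl
  · intro a x
    simpa using hg a x

lemma exists_ultra_limit {U : Ultrafilter ι} {z : ι → ℂ} {C : ℝ} (hz : ∀ i, ‖z i‖ ≤ C) :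
    ∃ y, Tendsto z U (𝓝 y) := by
  have hK : IsCompact (Metric.closedBall (0:ℂ) C) := isCompact_closedBall _ _
  obtain ⟨y, -, hy⟩ := hK.ultrafilter_le_nhds (U.map z) (by
    rw [Ultrafilter.coe_map, le_principal_iff, mem_map]
    exact Eventually.of_forall fun i => by simpa using hz i)
  exact ⟨y, hy⟩

lemma exists_bilin_ultra_limit {U : Ultrafilter ι} {S : ι → A →L[ℂ] X →L[ℂ] ℂ} {C : ℝ}
    (hS : ∀ i, ‖S i‖ ≤ C) :
    ∃ G : A →L[ℂ] X →L[ℂ] ℂ, ∀ a x, Tendsto (fun i => S i a x) U (𝓝 (G a x)) :=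
  exists_bilin_limit hS fun a x => exists_ultra_limit
    fun i => (S i).le_of_opNorm₂_le_of_le (hS i) (le_refl ‖a‖) (le_refl ‖x‖)

lemma exists_lin_ultra_limit {U : Ultrafilter ι} {S : ι → X →L[ℂ] ℂ} {C : ℝ}
    (hS : ∀ i, ‖S i‖ ≤ C) :
    ∃ G : X →L[ℂ] ℂ, ∀ x, Tendsto (fun i => S i x) U (𝓝 (G x)) := by
  obtain ⟨G, hG⟩ := exists_bilin_ultra_limit (U := U) (A := ℂ) (C := C)
    (S := fun i => (ContinuousLinearMap.toSpanSingleton ℂ (S i))) (fun i => by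
      rw [ContinuousLinearMap.norm_toSpanSingleton]; exact hS i)
  exact ⟨G 1, fun x => by simpa using hG 1 x⟩

end analytic

section reduction

/-- Reduction to essential bimodules. -/
lemma amenable_of_essential {T ι : Type*} [NonUnitalNormedRing T] [NormedSpace ℂ T]
    (U : Ultrafilter ι) (u : ι → T) (C : ℝ) (hu : ∀ i, ‖u i‖ ≤ C)
    (hl : ∀ t, Tendsto (fun i => u i * t) U (𝓝 t))
    (hr : ∀ t, Tendsto (fun i => t * u i) U (𝓝 t))
    (H : ∀ (X : Type) (_ : NormedAddCommGroup X) (_ : NormedSpace ℂ X) (_ : CompleteSpace X)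
      (σ : BanachBimodule T X) (D : T →L[ℂ] (X →L[ℂ] ℂ)),
      (∀ x, Tendsto (fun i => σ.L (u i) x) U (𝓝 x)) →
      (∀ x, Tendsto (fun i => σ.R (u i) x) U (𝓝 x)) →
      IsDualDerivation σ D → IsInnerDualDerivation σ D) : Amenable T := by
  intro X _ _ _ σ D hD
  have hbd : ∀ {E : Type} [NormedAddCommGroup E] [NormedSpace ℂ E] (Φ : T →L[ℂ] E) (i),
      ‖Φ (u i)‖ ≤ ‖Φ‖ * C := fun Φ i => Φ.le_opNorm_of_le (hu i)
  have Ltend : ∀ t x, Tendsto (fun i => σ.L (u i) (σ.L t x)) U (𝓝 (σ.L t x)) := by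
    intro t x
    have := ((σ.L.flip x).continuous.tendsto t).comp (hl t)
    refine this.congr fun i => ?_
    simp [σ.L_mul]
  have Rtend : ∀ t x, Tendsto (fun i => σ.R (u i) (σ.R t x)) U (𝓝 (σ.R t x)) := by
    intro t x
    have := ((σ.R.flip x).continuous.tendsto t).comp (hr t)
    refine this.congr fun i => ?_
    simp [σ.R_mul]
  let Y : Submodule ℂ X :=
    { carrier := {x | Tendsto (fun i => σ.L (u i) x) U (𝓝 x)} ∩
        {x | Tendsto (fun i => σ.R (u i) x) U (𝓝 x)}
      add_mem' := fun {a b} ha hb => ⟨by simpa using ha.1.add hb.1, by simpa using ha.2.add hb.2⟩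
      zero_mem' := ⟨by simp, by simp⟩
      smul_mem' := fun c x hx =>
        ⟨by simpa using hx.1.const_smul c, by simpa using hx.2.const_smul c⟩ }
  have hYc : IsClosed (Y : Set X) :=
    (isClosed_tendsto (hbd σ.L) (ContinuousLinearMap.id ℂ X)).inter
      (isClosed_tendsto (hbd σ.R) (ContinuousLinearMap.id ℂ X))
  have : CompleteSpace Y := hYc.completeSpace_coe
  have hLY : ∀ t, ∀ x ∈ Y, σ.L t x ∈ Y := fun t x hx => ⟨Ltend t x, by
    have := ((σ.L t).continuous.tendsto x).comp hx.2
    exact this.congr fun i => by simp [σ.LR_comm]⟩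
  have hRY : ∀ t, ∀ x ∈ Y, σ.R t x ∈ Y := fun t x hx => ⟨by
    have := ((σ.R t).continuous.tendsto x).comp hx.1
    exact this.congr fun i => by simp [σ.LR_comm], Rtend t x⟩
  have hLRY : ∀ s t x, σ.L s (σ.R t x) ∈ Y := fun s t x => ⟨Ltend _ _, by
    rw [← σ.LR_comm]; exact Rtend _ _⟩
  have restr : ∀ M : T →L[ℂ] X →L[ℂ] X, (∀ t, ∀ x ∈ Y, M t x ∈ Y) →
      ∃ N : T →L[ℂ] Y →L[ℂ] Y, ∀ t (y : Y), ((N t y : Y) : X) = M t y := by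
    intro M hM
    refine ⟨LinearMap.mkContinuous₂ (LinearMap.mk₂ ℂ
      (fun t (y : Y) => (⟨M t y, hM t y y.2⟩ : Y)) ?_ ?_ ?_ ?_) ‖M‖ ?_, ?_⟩
    · intro a b x; ext; simp
    · intro a b x; ext; simp
    · intro a b x; ext; simp
    · intro a b x; ext; simp
    · intro a x; exact M.le_opNorm₂ a x
    · intro t y; rfl
  obtain ⟨NL, hNL⟩ := restr σ.L hLY
  obtain ⟨NR, hNR⟩ := restr σ.R hRY
  let τ : BanachBimodule T Y :=
    { L := NL
      R := NR
      L_mul := fun a b => by ext y; simp [hNL, σ.L_mul]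
      R_mul := fun a b => by ext y; simp [hNR, σ.R_mul]
      LR_comm := fun a b x => by ext; simp [hNL, hNR, σ.LR_comm] }
  let DY : T →L[ℂ] (Y →L[ℂ] ℂ) := ((ContinuousLinearMap.compL ℂ Y X ℂ).flip Y.subtypeL).comp D
  have hDY : ∀ t (y : Y), DY t y = D t y := fun t y => rfl
  obtain ⟨f₀, hf₀⟩ := H Y _ _ inferInstance τ DY
    (fun y => by
      rw [tendsto_subtype_rng]
      exact y.2.1.congr fun i => (hNL _ _).symm)
    (fun y => by
      rw [tendsto_subtype_rng]
      exact y.2.2.congr fun i => (hNR _ _).symm)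
    (fun a b y => by
      simp only [hDY]
      rw [hD a b]
      simp only [τ, hNL, hNR])
  obtain ⟨g, hg, -⟩ := exists_extension_norm_eq Y f₀
  let D' : T →L[ℂ] (X →L[ℂ] ℂ) := D - ((ContinuousLinearMap.compL ℂ X X ℂ g).comp σ.R -
    (ContinuousLinearMap.compL ℂ X X ℂ g).comp σ.L)
  have hD'a : ∀ t x, D' t x = D t x - (g (σ.R t x) - g (σ.L t x)) := fun t x => rfl
  have hD' : ∀ a b x, D' (a * b) x = D' b (σ.R a x) + D' a (σ.L b x) := by
    intro a b x
    simp only [hD'a, hD a b x, σ.L_mul, σ.R_mul, ContinuousLinearMap.comp_apply, σ.LR_comm]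
    ring
  have hD'Y : ∀ t, ∀ y ∈ Y, D' t y = 0 := by
    intro t y hy
    have h := hf₀ t ⟨y, hy⟩
    rw [hDY, ← hg, ← hg] at h
    simp only [τ, hNL, hNR] at h
    rw [hD'a, h, sub_self]
  obtain ⟨f₁, hf₁⟩ := exists_lin_ultra_limit (U := U) (hbd D')
  obtain ⟨f₂, hf₂⟩ := exists_lin_ultra_limit (U := U) (S := fun i => f₁.comp (σ.L (u i)))
    (C := ‖f₁‖ * (‖σ.L‖ * C))
    (fun i => (ContinuousLinearMap.opNorm_comp_le _ _).trans (by gcongr; exact hbd σ.L i))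
  have hf₁Y : ∀ y ∈ Y, f₁ y = 0 := fun y hy =>
    tendsto_nhds_unique (hf₁ y) (by simp [hD'Y _ y hy])
  have hcont : ∀ x, Continuous fun t => D' t x := fun x => (D'.flip x).continuous
  have k1 : ∀ a x, Tendsto (fun i => D' a (σ.R (u i) x)) U (𝓝 (D' a x - f₁ (σ.L a x))) := by
    intro a x
    have h := ((hcont x).tendsto a).comp (hl a)
    have h2 := h.sub (hf₁ (σ.L a x))
    refine h2.congr fun i => ?_
    simp [hD']
  have k2 : ∀ a b x, D' (a * b) x - f₁ (σ.L (a * b) x) = D' b (σ.R a x) := by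
    intro a b x
    refine tendsto_nhds_unique (k1 (a * b) x) ?_
    have e : ∀ i, D' (a * b) (σ.R (u i) x) = D' b (σ.R (u i * a) x) := by
      intro i
      rw [hD', hD'Y a _ (hLRY _ _ _), add_zero, σ.R_mul]; rfl
    simp only [e]
    have := (((D' b).comp (σ.R.flip x)).continuous.tendsto a).comp (hl a)
    exact this
  have k3 : ∀ a x, D' a x - f₁ (σ.L a x) = f₁ (σ.R a x) := by
    intro a x
    refine tendsto_nhds_unique ?_ (hf₁ (σ.R a x))
    simp only [← k2]
    have c : Continuous fun t => D' t x - f₁ (σ.L t x) :=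
      (D'.flip x - f₁.comp (σ.L.flip x)).continuous
    exact (c.tendsto a).comp (hr a)
  have k4 : ∀ a x, f₂ (σ.L a x) = f₁ (σ.L a x) := fun a x =>
    tendsto_nhds_unique (hf₂ _) ((f₁.continuous.tendsto _).comp (Ltend a x))
  have k5 : ∀ a x, f₂ (σ.R a x) = 0 := fun a x =>
    tendsto_nhds_unique (hf₂ _) (by simp [hf₁Y _ (hLRY _ a x)])
  refine ⟨g + f₁ - (2 : ℂ) • f₂, fun a x => ?_⟩
  have := k3 a x
  rw [hD'a] at this
  simp only [sub_apply, add_apply, smul_apply, k4, k5, smul_eq_mul]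
  linear_combination this

end reduction

section half

set_option maxHeartbeats 1000000 in
set_option synthInstance.maxHeartbeats 400000 in
set_option maxSynthPendingDepth 6 in
/-- Splitting a multiplicative bilinear action into its two commuting halves. -/
lemma exists_halves {ι A X : Type*} [NormedAddCommGroup A] [NormedSpace ℂ A]
    [NormedAddCommGroup X] [NormedSpace ℂ X] [CompleteSpace X] (U : Ultrafilter ι)
    (K : A →L[ℂ] A →L[ℂ] X →L[ℂ] X) (mA mB : A → A → A)
    (assA : ∀ a b c, mA (mA a b) c = mA a (mA b c))
    (assB : ∀ a b c, mB (mB a b) c = mB a (mB b c))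
    (hK : ∀ a b c d x, K a b (K c d x) = K (mA a c) (mB b d) x)
    (e : ι → A) (C : ℝ) (he : ∀ i, ‖e i‖ ≤ C)
    (hA : ∀ a, Tendsto (fun i => mA (e i) a) U (𝓝 a))
    (hB : ∀ a, Tendsto (fun i => mB (e i) a) U (𝓝 a))
    (ess : ∀ x, Tendsto (fun i => K (e i) (e i) x) U (𝓝 x)) :
    ∃ l l' : A →L[ℂ] X →L[ℂ] X,
      (∀ a x, Tendsto (fun i => K a (e i) x) U (𝓝 (l a x))) ∧
      (∀ b x, Tendsto (fun i => K (e i) b x) U (𝓝 (l' b x))) ∧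
      (∀ a b x, l (mA a b) x = l a (l b x)) ∧
      (∀ a b x, l' (mB a b) x = l' a (l' b x)) ∧
      (∀ a b x, l a (l' b x) = K a b x) ∧
      (∀ a b x, l' b (l a x) = K a b x) ∧
      (∀ x, Tendsto (fun i => l (e i) x) U (𝓝 x)) ∧
      (∀ x, Tendsto (fun i => l' (e i) x) U (𝓝 x)) := by
  have hb1 : ∀ i, ‖K.flip (e i)‖ ≤ ‖K.flip‖ * C := fun i => K.flip.le_opNorm_of_le (he i)
  have hb2 : ∀ i, ‖K (e i)‖ ≤ ‖K‖ * C := fun i => K.le_opNorm_of_le (he i)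
  have t1 : ∀ a c d x, Tendsto (fun i => K a (e i) (K c d x)) U (𝓝 (K (mA a c) d x)) := by
    intro a c d x
    simp only [hK]
    exact ((((K (mA a c)).flip x).continuous.tendsto d).comp (hB d))
  have t2 : ∀ b c d x, Tendsto (fun i => K (e i) b (K c d x)) U (𝓝 (K c (mB b d) x)) := by
    intro b c d x
    simp only [hK]
    exact ((((K.flip (mB b d)).flip x).continuous.tendsto c).comp (hA c))
  obtain ⟨l, hl⟩ := exists_bilin_limit (F := (U : Filter ι)) hb1 (fun a x =>
    exists_tendsto_of_approx (S := fun i => K.flip (e i) a) (C := ‖K.flip‖ * C * ‖a‖)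
      (fun i => (K.flip (e i)).le_of_opNorm_le (hb1 i) a) (ess x) (fun j => ⟨_, t1 _ _ _ _⟩))
  obtain ⟨l', hl'⟩ := exists_bilin_limit (F := (U : Filter ι)) hb2 (fun a x =>
    exists_tendsto_of_approx (S := fun i => K (e i) a) (C := ‖K‖ * C * ‖a‖)
      (fun i => (K (e i)).le_of_opNorm_le (hb2 i) a) (ess x) (fun j => ⟨_, t2 _ _ _ _⟩))
  have lK : ∀ a c d x, l a (K c d x) = K (mA a c) d x := fun a c d x =>
    tendsto_nhds_unique (hl _ _) (t1 _ _ _ _)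
  have l'K : ∀ b c d x, l' b (K c d x) = K c (mB b d) x := fun a c d x =>
    tendsto_nhds_unique (hl' _ _) (t2 _ _ _ _)
  have ext : ∀ F G : X →L[ℂ] X, (∀ c d x, F (K c d x) = G (K c d x)) → ∀ x, F x = G x := by
    intro F G h x
    refine tendsto_nhds_unique ((F.continuous.tendsto x).comp (ess x)) ?_
    refine ((G.continuous.tendsto x).comp (ess x)).congr fun i => ?_
    exact (h _ _ _).symm
  have clo : ∀ S : Set X, IsClosed S → (∀ c d x, K c d x ∈ S) → ∀ x, x ∈ S := fun S hS h x =>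
    hS.mem_of_tendsto (ess x) (Eventually.of_forall fun i => h _ _ _)
  refine ⟨l, l', hl, hl', ?_, ?_, ?_, ?_, ?_, ?_⟩
  · intro a b
    exact ext (l (mA a b)) ((l a).comp (l b)) (fun c d x => by simp [lK, assA])
  · intro a b
    exact ext (l' (mB a b)) ((l' a).comp (l' b)) (fun c d x => by simp [l'K, assB])
  · intro a b
    exact ext ((l a).comp (l' b)) (K a b) (fun c d x => by simp [lK, l'K, hK])
  · intro a b
    exact ext ((l' b).comp (l a)) (K a b) (fun c d x => by simp [lK, l'K, hK])
  · refine clo _ (isClosed_tendsto (S := fun i => l (e i)) (C := ‖l‖ * C)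
      (fun i => l.le_opNorm_of_le (he i)) (ContinuousLinearMap.id ℂ X)) ?_
    intro c d x
    change Tendsto _ _ _
    simp only [lK]
    exact (((K.flip d).flip x).continuous.tendsto c).comp (hA c)
  · refine clo _ (isClosed_tendsto (S := fun i => l' (e i)) (C := ‖l'‖ * C)
      (fun i => l'.le_opNorm_of_le (he i)) (ContinuousLinearMap.id ℂ X)) ?_
    intro c d x
    change Tendsto _ _ _
    simp only [l'K]
    exact (((K c).flip x).continuous.tendsto d).comp (hB d)

/-- Two continuous linear maps agreeing on elementary tensors agree. -/
lemma clm_ext_of_dense {A B T E : Type*} [NormedAddCommGroup T] [NormedSpace ℂ T]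
    [NormedAddCommGroup E] [NormedSpace ℂ E] (k : A → B → T)
    (hd : Dense (Submodule.span ℂ (Set.range fun p : A × B => k p.1 p.2) : Set T))
    (F G : T →L[ℂ] E) (h : ∀ a b, F (k a b) = G (k a b)) : F = G := by
  refine ContinuousLinearMap.ext_on hd ?_
  rintro _ ⟨p, rfl⟩
  exact h _ _

end half

section main

set_option maxHeartbeats 2000000 in
set_option synthInstance.maxHeartbeats 400000 in
set_option maxSynthPendingDepth 6 in
lemma inner_of_essential {ι A T₁ T₂ : Type*} [NonUnitalNormedRing A] [NormedSpace ℂ A]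
    [IsScalarTower ℂ A A] [SMulCommClass ℂ A A]
    [NonUnitalNormedRing T₁] [NormedSpace ℂ T₁] [IsScalarTower ℂ T₁ T₁] [SMulCommClass ℂ T₁ T₁]
    [CompleteSpace T₁] [NonUnitalNormedRing T₂] [NormedSpace ℂ T₂]
    (P₁ : IsProjTensorProduct A A T₁) (hT₁ : Amenable T₁)
    (k : A →L[ℂ] A →L[ℂ] T₂) (hk : ∀ a b c d, k a b * k c d = k (a * c) (d * b))
    (hkd : Dense (Submodule.span ℂ (Set.range fun p : A × A => k p.1 p.2) : Set T₂))
    (U : Ultrafilter ι) (e : ι → A) (C : ℝ) (he : ∀ i, ‖e i‖ ≤ C)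
    (hel : ∀ a, Tendsto (fun i => e i * a) U (𝓝 a))
    (her : ∀ a, Tendsto (fun i => a * e i) U (𝓝 a))
    (X : Type) [NormedAddCommGroup X] [NormedSpace ℂ X] [CompleteSpace X]
    (σ : BanachBimodule T₂ X) (D : T₂ →L[ℂ] (X →L[ℂ] ℂ))
    (essL : ∀ x, Tendsto (fun i => σ.L (k (e i) (e i)) x) U (𝓝 x))
    (essR : ∀ x, Tendsto (fun i => σ.R (k (e i) (e i)) x) U (𝓝 x))
    (hD : IsDualDerivation σ D) : IsInnerDualDerivation σ D := by
  let KL : A →L[ℂ] A →L[ℂ] X →L[ℂ] X := (ContinuousLinearMap.compL ℂ A T₂ _ σ.L).comp k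
  let KR : A →L[ℂ] A →L[ℂ] X →L[ℂ] X := (ContinuousLinearMap.compL ℂ A T₂ _ σ.R).comp k
  let KD : A →L[ℂ] A →L[ℂ] X →L[ℂ] ℂ := (ContinuousLinearMap.compL ℂ A T₂ _ D).comp k
  have eKL : ∀ a b, KL a b = σ.L (k a b) := fun _ _ => rfl
  have eKR : ∀ a b, KR a b = σ.R (k a b) := fun _ _ => rfl
  have eKD : ∀ a b, KD a b = D (k a b) := fun _ _ => rfl
  have comm0 : ∀ a b c d x, KL a b (KR c d x) = KR c d (KL a b x) := fun a b c d x => by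
    rw [eKL, eKR, σ.LR_comm]
  have der0 : ∀ a b c d x, KD (a * c) (d * b) x = KD c d (KR a b x) + KD a b (KL c d x) := by
    intro a b c d x
    rw [eKD, ← hk, hD]; rfl
  obtain ⟨l, l', hl, hl', lmul, l'mul, ll', l'l, le, l'e⟩ := exists_halves U KL
    (fun a b => a * b) (fun a b => b * a) (fun a b c => mul_assoc _ _ _)
    (fun a b c => (mul_assoc _ _ _).symm)
    (fun a b c d x => by rw [eKL, eKL, eKL, ← hk, σ.L_mul]; rfl) e C he hel her essL
  obtain ⟨r, r', hr, hr', rmul, r'mul, rr', r'r, re, r'e⟩ := exists_halves U KR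
    (fun a b => b * a) (fun a b => a * b) (fun a b c => (mul_assoc _ _ _).symm)
    (fun a b c => (mul_assoc _ _ _))
    (fun a b c d x => by rw [eKR, eKR, eKR, ← hk, σ.R_mul]; rfl) e C he her hel essR
  have cl : ∀ a c d x, l a (KR c d x) = KR c d (l a x) := fun a c d x =>
    tendsto_nhds_unique (hl a _) ((((KR c d).continuous.tendsto _).comp (hl a x)).congr
      fun i => (comm0 _ _ _ _ _).symm)
  have cl' : ∀ a c d x, l' a (KR c d x) = KR c d (l' a x) := fun a c d x =>
    tendsto_nhds_unique (hl' a _) ((((KR c d).continuous.tendsto _).comp (hl' a x)).congr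
      fun i => (comm0 _ _ _ _ _).symm)
  have lr : ∀ a b x, l a (r b x) = r b (l a x) := fun a b x =>
    tendsto_nhds_unique (((l a).continuous.tendsto _).comp (hr b x))
      ((hr b (l a x)).congr fun i => (cl _ _ _ _).symm)
  have lr' : ∀ a b x, l a (r' b x) = r' b (l a x) := fun a b x =>
    tendsto_nhds_unique (((l a).continuous.tendsto _).comp (hr' b x))
      ((hr' b (l a x)).congr fun i => (cl _ _ _ _).symm)
  have l'r : ∀ a b x, l' a (r b x) = r b (l' a x) := fun a b x =>
    tendsto_nhds_unique (((l' a).continuous.tendsto _).comp (hr b x))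
      ((hr b (l' a x)).congr fun i => (cl' _ _ _ _).symm)
  have l'r' : ∀ a b x, l' a (r' b x) = r' b (l' a x) := fun a b x =>
    tendsto_nhds_unique (((l' a).continuous.tendsto _).comp (hr' b x))
      ((hr' b (l' a x)).congr fun i => (cl' _ _ _ _).symm)
  have l'lc : ∀ a b x, l' b (l a x) = l a (l' b x) := fun a b x => by rw [ll', l'l]
  have r'rc : ∀ a b x, r' b (r a x) = r a (r' b x) := fun a b x => by rw [rr', r'r]
  have hb1 : ∀ i, ‖KD.flip (e i)‖ ≤ ‖KD.flip‖ * C := fun i => KD.flip.le_opNorm_of_le (he i)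
  have hb2 : ∀ i, ‖KD (e i)‖ ≤ ‖KD‖ * C := fun i => KD.le_opNorm_of_le (he i)
  obtain ⟨D₁, hD₁⟩ := exists_bilin_ultra_limit (U := U) hb1
  obtain ⟨D₂, hD₂⟩ := exists_bilin_ultra_limit (U := U) hb2
  simp only [ContinuousLinearMap.flip_apply] at hD₁
  have bb1 : ∀ a i, ‖KD a (e i)‖ ≤ ‖KD.flip‖ * C * ‖a‖ := fun a i =>
    (KD.flip (e i)).le_of_opNorm_le (hb1 i) a
  have bb2 : ∀ a i, ‖KD (e i) a‖ ≤ ‖KD‖ * C * ‖a‖ := fun a i =>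
    (KD (e i)).le_of_opNorm_le (hb2 i) a
  have cc1 : ∀ {a x}, Continuous fun b => KD a b x := fun {a x} => ((KD a).flip x).continuous
  have cc2 : ∀ {b x}, Continuous fun a => KD a b x := fun {b x} =>
    ((KD.flip b).flip x).continuous
  have i0 : ∀ a b c x, KD (a * b) c x = KD b c (r a x) + D₁ a (KL b c x) := by
    intro a b c x
    refine tendsto_nhds_unique (f := fun i => KD (a * b) (c * e i) x) (l := (U : Filter ι))
      ((cc1.tendsto _).comp (her c)) ?_
    simp only [der0]
    exact (((KD b c).continuous.tendsto _).comp (hr a x)).add (hD₁ a _)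
  have i1 : ∀ a b x, D₁ (a * b) x = D₁ b (r a x) + D₁ a (l b x) := by
    intro a b x
    refine tendsto_nhds_unique (hD₁ (a * b) x) ?_
    simp only [i0]
    exact (hD₁ b _).add (((D₁ a).continuous.tendsto _).comp (hl b x))
  have ii0 : ∀ a b c x, KD c (a * b) x = KD c a (r' b x) + D₂ b (KL c a x) := by
    intro a b c x
    refine tendsto_nhds_unique (f := fun i => KD (e i * c) (a * b) x) (l := (U : Filter ι))
      ((cc2.tendsto _).comp (hel c)) ?_
    simp only [der0]
    exact (((KD c a).continuous.tendsto _).comp (hr' b x)).add (hD₂ b _)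
  have ii1 : ∀ a b x, D₂ (a * b) x = D₂ a (r' b x) + D₂ b (l' a x) := by
    intro a b x
    refine tendsto_nhds_unique (hD₂ (a * b) x) ?_
    simp only [ii0]
    exact (hD₂ a _).add (((D₂ b).continuous.tendsto _).comp (hl' a x))
  have iii1 : ∀ a b x, KD a b x = D₂ b (r a x) + D₁ a (l' b x) := by
    intro a b x
    refine tendsto_nhds_unique (f := fun i => KD (a * e i) b x) (l := (U : Filter ι))
      ((cc2.tendsto _).comp (her a)) ?_
    simp only [i0]
    exact (hD₂ b _).add (((D₁ a).continuous.tendsto _).comp (hl' b x))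
  have iii2 : ∀ a b x, KD a b x = D₁ a (r' b x) + D₂ b (l a x) := by
    intro a b x
    refine tendsto_nhds_unique (f := fun i => KD a (e i * b) x) (l := (U : Filter ι))
      ((cc1.tendsto _).comp (hel b)) ?_
    simp only [ii0]
    exact (hD₁ a _).add (((D₂ b).continuous.tendsto _).comp (hl a x))
  have z1 : ∀ x, Tendsto (fun i => D₁ (e i) x) U (𝓝 0) := by
    obtain ⟨g, hg⟩ := exists_lin_ultra_limit (U := U) (S := fun i => D₁ (e i)) (C := ‖D₁‖ * C)
      (fun i => D₁.le_opNorm_of_le (he i))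
    have g0 : ∀ a x, g (r a x) = 0 := by
      intro a x
      refine tendsto_nhds_unique (hg (r a x)) ?_
      have h1 : Tendsto (fun i => D₁ (a * e i) x - D₁ a (l (e i) x)) U (𝓝 (D₁ a x - D₁ a x)) :=
        (((D₁.flip x).continuous.tendsto _).comp (her a)).sub
          (((D₁ a).continuous.tendsto _).comp (le x))
      rw [sub_self] at h1
      exact h1.congr fun i => by rw [i1]; ring
    intro x
    have : g x = 0 := tendsto_nhds_unique ((g.continuous.tendsto _).comp (re x))
      (by simp [Function.comp_def, g0])
    rw [← this]; exact hg x
  have z2 : ∀ x, Tendsto (fun i => D₂ (e i) x) U (𝓝 0) := by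
    obtain ⟨g, hg⟩ := exists_lin_ultra_limit (U := U) (S := fun i => D₂ (e i)) (C := ‖D₂‖ * C)
      (fun i => D₂.le_opNorm_of_le (he i))
    have g0 : ∀ a x, g (r' a x) = 0 := by
      intro a x
      refine tendsto_nhds_unique (hg (r' a x)) ?_
      have h1 : Tendsto (fun i => D₂ (e i * a) x - D₂ a (l' (e i) x)) U (𝓝 (D₂ a x - D₂ a x)) :=
        (((D₂.flip x).continuous.tendsto _).comp (hel a)).sub
          (((D₂ a).continuous.tendsto _).comp (l'e x))
      rw [sub_self] at h1
      exact h1.congr fun i => by rw [ii1]; ring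
    intro x
    have : g x = 0 := tendsto_nhds_unique ((g.continuous.tendsto _).comp (r'e x))
      (by simp [Function.comp_def, g0])
    rw [← this]; exact hg x
  let bl : (A →L[ℂ] X →L[ℂ] X) → (A →L[ℂ] X →L[ℂ] X) → (A →L[ℂ] A →L[ℂ] X →L[ℂ] X) :=
    fun p q => ((ContinuousLinearMap.compL ℂ A (X →L[ℂ] X) (X →L[ℂ] X)).flip q).comp
      ((ContinuousLinearMap.compL ℂ X X X).comp p)
  have ebl : ∀ p q a b x, bl p q a b x = p a (q b x) := fun _ _ _ _ _ => rfl
  obtain ⟨L₁, hL₁, -⟩ := P₁.lift _ _ _ inferInstance (bl l r')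
  obtain ⟨R₁, hR₁, -⟩ := P₁.lift _ _ _ inferInstance (bl r l')
  let DD : A →L[ℂ] A →L[ℂ] X →L[ℂ] ℂ :=
    ((ContinuousLinearMap.compL ℂ A (X →L[ℂ] X) (X →L[ℂ] ℂ)).flip r').comp
      ((ContinuousLinearMap.compL ℂ X X ℂ).comp D₁) -
    (((ContinuousLinearMap.compL ℂ A (X →L[ℂ] X) (X →L[ℂ] ℂ)).flip r).comp
      ((ContinuousLinearMap.compL ℂ X X ℂ).comp D₂)).flip
  have eDD : ∀ a b x, DD a b x = D₁ a (r' b x) - D₂ b (r a x) := fun _ _ _ => rfl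
  obtain ⟨Δ, hΔ, -⟩ := P₁.lift _ _ _ inferInstance DD
  have hL₁' : ∀ a b x, L₁ (P₁.ι a b) x = l a (r' b x) := fun a b x => by rw [hL₁, ebl]
  have hR₁' : ∀ a b x, R₁ (P₁.ι a b) x = r a (l' b x) := fun a b x => by rw [hR₁, ebl]
  have hΔ' : ∀ a b x, Δ (P₁.ι a b) x = D₁ a (r' b x) - D₂ b (r a x) :=
    fun a b x => by rw [hΔ, eDD]
  have ext2 : ∀ {E : Type} [NormedAddCommGroup E] [NormedSpace ℂ E]
      (F G : T₁ →L[ℂ] T₁ →L[ℂ] E),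
      (∀ a b c d, F (P₁.ι a b) (P₁.ι c d) = G (P₁.ι a b) (P₁.ι c d)) → F = G := by
    intro E _ _ F G h
    refine clm_ext_of_dense (fun a b => P₁.ι a b) P₁.dense_span F G fun a b => ?_
    exact clm_ext_of_dense (fun a b => P₁.ι a b) P₁.dense_span _ _ fun c d => h a b c d
  let μ : T₁ →L[ℂ] T₁ →L[ℂ] T₁ := ContinuousLinearMap.mul ℂ T₁
  let pm : ∀ {E : Type} [NormedAddCommGroup E] [NormedSpace ℂ E], (T₁ →L[ℂ] E) →
      (T₁ →L[ℂ] T₁ →L[ℂ] E) := fun {E} _ _ φ => (ContinuousLinearMap.compL ℂ T₁ T₁ E φ).comp μ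
  let cm : ∀ {E : Type} [NormedAddCommGroup E] [NormedSpace ℂ E], (T₁ →L[ℂ] X →L[ℂ] E) →
      (T₁ →L[ℂ] X →L[ℂ] X) → (T₁ →L[ℂ] T₁ →L[ℂ] X →L[ℂ] E) := fun {E} _ _ p q =>
    ((ContinuousLinearMap.compL ℂ T₁ (X →L[ℂ] X) (X →L[ℂ] E)).flip q).comp
      ((ContinuousLinearMap.compL ℂ X X E).comp p)
  have epm : ∀ {E : Type} [NormedAddCommGroup E] [NormedSpace ℂ E] (φ : T₁ →L[ℂ] E) s t,
    pm φ s t = φ (s * t) := fun _ _ _ => rfl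
  have ecm : ∀ {E : Type} [NormedAddCommGroup E] [NormedSpace ℂ E] (p : T₁ →L[ℂ] X →L[ℂ] E)
    (q : T₁ →L[ℂ] X →L[ℂ] X) s t x, cm p q s t x = p s (q t x) := fun _ _ _ _ _ => rfl
  have gL : pm L₁ = cm L₁ L₁ := ext2 _ _ fun a b c d => by
    ext x
    simp only [epm, ecm, P₁.ι_mul, hL₁', lmul, r'mul, lr']
  have gR : pm R₁ = (cm R₁ R₁).flip := ext2 _ _ fun a b c d => by
    ext x
    simp only [epm, ecm, ContinuousLinearMap.flip_apply, P₁.ι_mul, hR₁', rmul, l'mul, l'r]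
  have gLR : cm L₁ R₁ = (cm R₁ L₁).flip := ext2 _ _ fun a b c d => by
    ext x
    simp only [ecm, ContinuousLinearMap.flip_apply, hR₁', hL₁', lr, lr', l'r, l'r', l'lc, r'rc]
  have gD : pm Δ = (cm Δ R₁).flip + cm Δ L₁ := ext2 _ _ fun a b c d => by
    ext x
    have h := (iii1 c b (r a (r' d x))).symm.trans (iii2 c b (r a (r' d x)))
    simp only [add_apply, epm, ecm, ContinuousLinearMap.flip_apply, P₁.ι_mul, hΔ', hR₁', hL₁',
      i1, ii1, rmul, r'mul, lmul, l'mul, lr, lr', l'r, l'r', l'lc, r'rc] at h ⊢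
    linear_combination -h
  let τ : BanachBimodule T₁ X :=
    { L := L₁
      R := R₁
      L_mul := fun s t => by ext x; rw [← epm L₁, gL, ecm]; rfl
      R_mul := fun s t => by ext x; rw [← epm R₁, gR, ContinuousLinearMap.flip_apply, ecm]; rfl
      LR_comm := fun s t x => by
        rw [← ecm L₁ R₁, gLR, ContinuousLinearMap.flip_apply, ecm] }
  obtain ⟨f, hf⟩ := hT₁ X _ _ inferInstance τ Δ (fun s t x => by
    rw [← epm Δ, gD, add_apply, add_apply, add_apply, ContinuousLinearMap.flip_apply, ecm, ecm])
  have hf' : ∀ a b x, D₁ a (r' b x) - D₂ b (r a x) = f (r a (l' b x)) - f (l a (r' b x)) := by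
    intro a b x
    have := hf (P₁.ι a b) x
    rw [hΔ'] at this
    simpa only [τ, hL₁', hR₁'] using this
  have f1 : ∀ a x, D₁ a x = f (r a x) - f (l a x) := by
    intro a x
    have h1 : Tendsto (fun i => D₁ a (r' (e i) x) - D₂ (e i) (r a x)) U (𝓝 (D₁ a x - 0)) :=
      (((D₁ a).continuous.tendsto _).comp (r'e x)).sub (z2 _)
    rw [sub_zero] at h1
    refine tendsto_nhds_unique h1 ?_
    simp only [hf']
    exact (((f.comp (r a)).continuous.tendsto _).comp (l'e x)).sub
      (((f.comp (l a)).continuous.tendsto _).comp (r'e x))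
  have f2 : ∀ b x, D₂ b x = f (r' b x) - f (l' b x) := by
    intro b x
    have h1 : Tendsto (fun i => D₂ b (r (e i) x) - D₁ (e i) (r' b x)) U (𝓝 (D₂ b x - 0)) :=
      (((D₂ b).continuous.tendsto _).comp (re x)).sub (z1 _)
    rw [sub_zero] at h1
    refine tendsto_nhds_unique h1 ?_
    have h2 : Tendsto (fun i => f (l (e i) (r' b x)) - f (r (e i) (l' b x))) U
        (𝓝 (f (r' b x) - f (l' b x))) :=
      ((f.continuous.tendsto _).comp (le _)).sub ((f.continuous.tendsto _).comp (re _))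
    exact h2.congr fun i => by linear_combination (hf' (e i) b x)
  refine ⟨f, ?_⟩
  have fin : D = (ContinuousLinearMap.compL ℂ X X ℂ f).comp σ.R -
      (ContinuousLinearMap.compL ℂ X X ℂ f).comp σ.L := by
    refine clm_ext_of_dense (fun a b => k a b) hkd _ _ fun a b => ?_
    ext x
    change KD a b x = f (KR a b x) - f (KL a b x)
    rw [iii1, f1, f2, ← ll', ← rr', r'rc, l'r]
    ring
  intro t x
  conv_lhs => rw [fin]
  rfl

end main

lemma amenable_of_net {ι₀ A T₁ T₂ : Type*} [NonUnitalNormedRing A] [NormedSpace ℂ A]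
    [IsScalarTower ℂ A A] [SMulCommClass ℂ A A]
    [NonUnitalNormedRing T₁] [NormedSpace ℂ T₁] [IsScalarTower ℂ T₁ T₁] [SMulCommClass ℂ T₁ T₁]
    [CompleteSpace T₁] [NonUnitalNormedRing T₂] [NormedSpace ℂ T₂]
    [IsScalarTower ℂ T₂ T₂] [SMulCommClass ℂ T₂ T₂]
    (P₁ : IsProjTensorProduct A A T₁) (hT₁ : Amenable T₁)
    (k : A →L[ℂ] A →L[ℂ] T₂) (hk : ∀ a b c d, k a b * k c d = k (a * c) (d * b))
    (hkd : Dense (Submodule.span ℂ (Set.range fun p : A × A => k p.1 p.2) : Set T₂))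
    (U : Ultrafilter ι₀) (z : ι₀ → A) (C : ℝ) (hC : ∀ i, ‖z i‖ ≤ C)
    (hel : ∀ a, Tendsto (fun i => z i * a) U (𝓝 a))
    (her : ∀ a, Tendsto (fun i => a * z i) U (𝓝 a)) : Amenable T₂ := by
  have hu : ∀ i, ‖k (z i) (z i)‖ ≤ ‖k‖ * C * C := fun i =>
    k.le_of_opNorm₂_le_of_le le_rfl (hC i) (hC i)
  let μ : T₂ →L[ℂ] T₂ →L[ℂ] T₂ := ContinuousLinearMap.mul ℂ T₂
  have dens : ∀ V : Submodule ℂ T₂, IsClosed (V : Set T₂) → (∀ a b, k a b ∈ V) → ∀ t, t ∈ V := by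
    intro V hV h t
    have h1 : Submodule.span ℂ (Set.range fun p : A × A => k p.1 p.2) ≤ V :=
      Submodule.span_le.2 (by rintro _ ⟨p, rfl⟩; exact h _ _)
    exact hV.closure_subset_iff.2 h1 (hkd t)
  have kt : ∀ {a b : A} {x y : ι₀ → A}, Tendsto x U (𝓝 a) → Tendsto y U (𝓝 b) →
      Tendsto (fun i => k (x i) (y i)) U (𝓝 (k a b)) := fun {a b x y} hx hy =>
    (k.continuous₂.tendsto (a, b)).comp (hx.prodMk_nhds hy)
  have hul : ∀ t, Tendsto (fun i => k (z i) (z i) * t) U (𝓝 t) := by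
    refine dens
      { carrier := {t | Tendsto (fun i => k (z i) (z i) * t) U (𝓝 t)}
        add_mem' := fun {a b} ha hb => by
          change Tendsto _ _ _
          simpa only [mul_add] using Tendsto.add ha hb
        zero_mem' := by
          change Tendsto _ _ _
          simp only [mul_zero]; exact tendsto_const_nhds
        smul_mem' := fun c x hx => by
          change Tendsto _ _ _
          simpa only [mul_smul_comm] using Tendsto.const_smul hx c } ?_ ?_
    · exact isClosed_tendsto (S := fun i => μ (k (z i) (z i))) (C := ‖μ‖ * (‖k‖ * C * C))
        (fun i => μ.le_opNorm_of_le (hu i)) (ContinuousLinearMap.id ℂ T₂)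
    · intro a b
      change Tendsto _ _ _
      simp only [hk]
      exact kt (hel a) (her b)
  have hur : ∀ t, Tendsto (fun i => t * k (z i) (z i)) U (𝓝 t) := by
    refine dens
      { carrier := {t | Tendsto (fun i => t * k (z i) (z i)) U (𝓝 t)}
        add_mem' := fun {a b} ha hb => by
          change Tendsto _ _ _
          simpa only [add_mul] using Tendsto.add ha hb
        zero_mem' := by
          change Tendsto _ _ _
          simp only [zero_mul]; exact tendsto_const_nhds
        smul_mem' := fun c x hx => by
          change Tendsto _ _ _
          simpa only [smul_mul_assoc] using Tendsto.const_smul hx c } ?_ ?_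
    · exact isClosed_tendsto (S := fun i => μ.flip (k (z i) (z i)))
        (C := ‖μ.flip‖ * (‖k‖ * C * C))
        (fun i => μ.flip.le_opNorm_of_le (hu i)) (ContinuousLinearMap.id ℂ T₂)
    · intro a b
      change Tendsto _ _ _
      simp only [hk]
      exact kt (her a) (hel b)
  exact amenable_of_essential U (fun i => k (z i) (z i)) _ hu hul hur
    (fun X _ _ _ σ D essL essR hD =>
      inner_of_essential P₁ hT₁ k hk hkd U z C hC hel her X σ D essL essR hD)

lemma exists_op_bilin {A T₂ : Type*} [NonUnitalNormedRing A] [NormedSpace ℂ A]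
    [NonUnitalNormedRing T₂] [NormedSpace ℂ T₂] [CompleteSpace T₂]
    (P₂ : IsProjTensorProduct A Aᵐᵒᵖ T₂) :
    ∃ k : A →L[ℂ] A →L[ℂ] T₂, ∀ a b, k a b = P₂.ι a (op b) :=
  ⟨((ContinuousLinearMap.compL ℂ A Aᵐᵒᵖ T₂).flip
    (opContinuousLinearEquiv ℂ : A ≃L[ℂ] Aᵐᵒᵖ).toContinuousLinearMap).comp P₂.ι, fun _ _ => rfl⟩

lemma exists_ultra_bai {A : Type*} [NonUnitalNormedRing A] (hA : HasBAI A) :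
    ∃ (ι : Type) (U : Ultrafilter ι) (z : ι → A) (C : ℝ), (∀ i, ‖z i‖ ≤ C) ∧
      (∀ a, Tendsto (fun i => z i * a) U (𝓝 a)) ∧
      (∀ a, Tendsto (fun i => a * z i) U (𝓝 a)) := by
  obtain ⟨S, hS⟩ := hA
  have : S.filter.NeBot := by
    letI := S.dir
    haveI := S.ne
    exact (inferInstance : (atTop : Filter S.ι).NeBot)
  have hU : (Ultrafilter.of S.filter : Filter S.ι) ≤ S.filter := Ultrafilter.of_le _
  exact ⟨S.ι, Ultrafilter.of S.filter, S.z, S.C, S.bdd, fun a => (hS a).2.mono_left hU,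
    fun a => (hS a).1.mono_left hU⟩

/-- if `A` has a bounded approximate identity and `A ⊗̂ A` is amenable,
then `A ⊗̂ Aᵒᵖ` is amenable. -/
theorem stmt6 {A T₁ T₂ : Type*} [NonUnitalNormedRing A] [NormedSpace ℂ A] [IsScalarTower ℂ A A] [SMulCommClass ℂ A A] [CompleteSpace A] [NonUnitalNormedRing T₁] [NormedSpace ℂ T₁] [IsScalarTower ℂ T₁ T₁] [SMulCommClass ℂ T₁ T₁] [CompleteSpace T₁] [NonUnitalNormedRing T₂] [NormedSpace ℂ T₂] [IsScalarTower ℂ T₂ T₂] [SMulCommClass ℂ T₂ T₂] [CompleteSpace T₂]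
    (P₁ : IsProjTensorProduct A A T₁) (P₂ : IsProjTensorProduct A Aᵐᵒᵖ T₂)
    (hA : HasBAI A) (hT₁ : Amenable T₁) : Amenable T₂ := by
  obtain ⟨ι₀, U, z, C, hC, hel, her⟩ := exists_ultra_bai hA
  obtain ⟨k, ek⟩ := exists_op_bilin P₂
  have hk : ∀ a b c d, k a b * k c d = k (a * c) (d * b) := fun a b c d => by
    rw [ek, ek, ek, P₂.ι_mul, op_mul]
  have hkd : Dense (Submodule.span ℂ (Set.range fun p : A × A => k p.1 p.2) : Set T₂) := by
    have : (Set.range fun p : A × A => k p.1 p.2) =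
        Set.range fun p : A × Aᵐᵒᵖ => P₂.ι p.1 p.2 := by
      ext t
      constructor
      · rintro ⟨p, rfl⟩; exact ⟨(p.1, op p.2), (ek _ _).symm⟩
      · rintro ⟨p, rfl⟩; exact ⟨(p.1, unop p.2), ek _ _⟩
    rw [this]; exact P₂.dense_span
  exact amenable_of_net P₁ hT₁ k hk hkd U z C hC hel her
end

section
/- Let A be a Banach algebra with a bounded approximate identity. Then the following are equivalent: (i) A is amenable; (ii) A ⊗̂ A is amenable; (iii) A ⊗̂ A^{op} is amenable. -/
open Filter Topology MulOpposite

namespace S9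

/-- pointwise limits of uniformly bounded bilinear maps -/
lemma lim2 {I V X Y : Type*} [NormedAddCommGroup V] [NormedSpace ℂ V]
    [NormedAddCommGroup X] [NormedSpace ℂ X] [NormedAddCommGroup Y] [NormedSpace ℂ Y]
    (l : Filter I) [l.NeBot] (Ψ : I → V →L[ℂ] X →L[ℂ] Y) (C : ℝ)
    (hC : ∀ i v x, ‖Ψ i v x‖ ≤ C * ‖v‖ * ‖x‖)
    (h : ∀ v x, ∃ y, Tendsto (fun i => Ψ i v x) l (𝓝 y)) :
    ∃ Φ : V →L[ℂ] X →L[ℂ] Y, ∀ v x, Tendsto (fun i => Ψ i v x) l (𝓝 (Φ v x)) := by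
  choose φ hφ using h
  refine ⟨LinearMap.mkContinuous₂ (LinearMap.mk₂ ℂ φ ?_ ?_ ?_ ?_) C ?_, fun v x => ?_⟩
  · intro v w x
    refine tendsto_nhds_unique (hφ (v + w) x) ?_
    simpa using (hφ v x).add (hφ w x)
  · intro c v x
    refine tendsto_nhds_unique (hφ (c • v) x) ?_
    simpa using (hφ v x).const_smul c
  · intro v x y
    refine tendsto_nhds_unique (hφ v (x + y)) ?_
    simpa using (hφ v x).add (hφ v y)
  · intro c v x
    refine tendsto_nhds_unique (hφ v (c • x)) ?_
    simpa using (hφ v x).const_smul c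
  · intro v x
    exact le_of_tendsto (hφ v x).norm (Eventually.of_forall fun i => hC i v x)
  · exact hφ v x

lemma lim1 {I X Y : Type*}
    [NormedAddCommGroup X] [NormedSpace ℂ X] [NormedAddCommGroup Y] [NormedSpace ℂ Y]
    (l : Filter I) [l.NeBot] (Ψ : I → X →L[ℂ] Y) (C : ℝ)
    (hC : ∀ i x, ‖Ψ i x‖ ≤ C * ‖x‖)
    (h : ∀ x, ∃ y, Tendsto (fun i => Ψ i x) l (𝓝 y)) :
    ∃ Φ : X →L[ℂ] Y, ∀ x, Tendsto (fun i => Ψ i x) l (𝓝 (Φ x)) := by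
  obtain ⟨Φ, hΦ⟩ := lim2 (V := ℂ) l (fun i => ContinuousLinearMap.toSpanSingleton ℂ (Ψ i)) C
    (by
      intro i v x
      have := hC i x
      simp only [ContinuousLinearMap.toSpanSingleton_apply, smul_apply,
        norm_smul]
      nlinarith [norm_nonneg v])
    (by
      intro v x
      obtain ⟨y, hy⟩ := h x
      exact ⟨v • y, by simpa using hy.const_smul v⟩)
  exact ⟨Φ 1, fun x => by simpa using hΦ 1 x⟩

lemma exists_lim_closure {I X Y : Type*}
    [NormedAddCommGroup X] [NormedSpace ℂ X] [NormedAddCommGroup Y] [NormedSpace ℂ Y]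
    [CompleteSpace Y]
    (l : Filter I) [l.NeBot] (Ψ : I → X →L[ℂ] Y) (C : ℝ)
    (hC : ∀ i x, ‖Ψ i x‖ ≤ C * ‖x‖) (G : Set X)
    (h : ∀ x ∈ G, ∃ y, Tendsto (fun i => Ψ i x) l (𝓝 y)) (x : X)
    (hx : x ∈ closure (Submodule.span ℂ G : Set X)) :
    ∃ y, Tendsto (fun i => Ψ i x) l (𝓝 y) := by
  have hspan : ∀ x ∈ Submodule.span ℂ G, ∃ y, Tendsto (fun i => Ψ i x) l (𝓝 y) := by
    intro x hx
    induction hx using Submodule.span_induction with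
    | mem x hx => exact h x hx
    | zero => exact ⟨0, by simp⟩
    | add x y _ _ hx hy =>
      obtain ⟨a, ha⟩ := hx
      obtain ⟨b, hb⟩ := hy
      exact ⟨a + b, by simpa using ha.add hb⟩
    | smul c x _ hx =>
      obtain ⟨a, ha⟩ := hx
      exact ⟨c • a, by simpa using ha.const_smul c⟩
  apply CompleteSpace.complete (f := map (fun i => Ψ i x) l)
  rw [Metric.cauchy_iff]
  refine ⟨inferInstance, fun ε hε => ?_⟩
  have hC' : 0 < |C| + 1 := by positivity
  obtain ⟨g, hg, hxg⟩ := Metric.mem_closure_iff.1 hx (ε / 4 / (|C| + 1)) (by positivity)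
  obtain ⟨y, hy⟩ := hspan g hg
  refine ⟨Metric.ball y (ε / 2), ?_, ?_⟩
  · have := Metric.tendsto_nhds.1 hy (ε / 4) (by positivity)
    rw [mem_map]
    filter_upwards [this] with i hi
    rw [Set.mem_preimage, Metric.mem_ball]
    have h1 : dist (Ψ i x) (Ψ i g) ≤ ε / 4 := by
      rw [dist_eq_norm, ← map_sub]
      rw [dist_eq_norm] at hxg
      calc ‖Ψ i (x - g)‖ ≤ C * ‖x - g‖ := hC _ _
        _ ≤ (|C| + 1) * ‖x - g‖ := by
          gcongr
          linarith [le_abs_self C]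
        _ ≤ (|C| + 1) * (ε / 4 / (|C| + 1)) := by gcongr
        _ = ε / 4 := by field_simp
    linarith [dist_triangle (Ψ i x) (Ψ i g) y]
  · intro a ha b hb
    rw [Metric.mem_ball] at ha hb
    linarith [dist_triangle_right a b y]

/-- convergence to a given continuous linear map from convergence on a total set -/
lemma tendsto_closure {I X Y : Type*}
    [NormedAddCommGroup X] [NormedSpace ℂ X] [NormedAddCommGroup Y] [NormedSpace ℂ Y]
    (l : Filter I) (Ψ : I → X →L[ℂ] Y) (w : X →L[ℂ] Y) (C : ℝ)
    (hC : ∀ i x, ‖Ψ i x‖ ≤ C * ‖x‖) (G : Set X)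
    (h : ∀ x ∈ G, Tendsto (fun i => Ψ i x) l (𝓝 (w x))) (x : X)
    (hx : x ∈ closure (Submodule.span ℂ G : Set X)) :
    Tendsto (fun i => Ψ i x) l (𝓝 (w x)) := by
  have hspan : ∀ x ∈ Submodule.span ℂ G, Tendsto (fun i => Ψ i x) l (𝓝 (w x)) := by
    intro x hx
    induction hx using Submodule.span_induction with
    | mem x hx => exact h x hx
    | zero => simpa using tendsto_const_nhds
    | add x y _ _ hx hy => simpa using hx.add hy
    | smul c x _ hx => simpa using hx.const_smul c
  rw [Metric.tendsto_nhds]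
  intro ε hε
  have hC' : 0 < |C| + 1 + ‖w‖ := by positivity
  obtain ⟨g, hg, hxg⟩ := Metric.mem_closure_iff.1 hx (ε / 2 / (|C| + 1 + ‖w‖)) (by positivity)
  have := Metric.tendsto_nhds.1 (hspan g hg) (ε / 2) (by positivity)
  filter_upwards [this] with i hi
  have h1 : dist (Ψ i x) (Ψ i g) + dist (w g) (w x) ≤ ε / 2 := by
    rw [dist_comm (w g), dist_eq_norm, dist_eq_norm, ← map_sub, ← map_sub]
    rw [dist_eq_norm] at hxg
    calc ‖Ψ i (x - g)‖ + ‖w (x - g)‖ ≤ C * ‖x - g‖ + ‖w‖ * ‖x - g‖ :=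
          add_le_add (hC _ _) (w.le_opNorm _)
      _ ≤ (|C| + 1) * ‖x - g‖ + ‖w‖ * ‖x - g‖ := by
        gcongr
        linarith [le_abs_self C]
      _ = (|C| + 1 + ‖w‖) * ‖x - g‖ := by ring
      _ ≤ (|C| + 1 + ‖w‖) * (ε / 2 / (|C| + 1 + ‖w‖)) := by gcongr
      _ = ε / 2 := by field_simp
  linarith [dist_triangle4 (Ψ i x) (Ψ i g) (w g) (w x)]

lemma exists_lim_ultra {I : Type*} (u : Ultrafilter I) (φ : I → ℂ) (C : ℝ)
    (h : ∀ i, ‖φ i‖ ≤ C) : ∃ y, Tendsto φ u (𝓝 y) := by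
  obtain ⟨y, _, hy⟩ := (isCompact_closedBall (0 : ℂ) C).ultrafilter_le_nhds (u.map φ) (by
    rw [Filter.le_principal_iff]
    exact Filter.mem_map.2 (Filter.univ_mem' fun i => by simpa using h i))
  exact ⟨y, hy⟩

/-- bounded approximate identity along an ultrafilter -/
structure UBAI (A : Type*) [NonUnitalNormedRing A] where
  I : Type
  u : Ultrafilter I
  z : I → A
  C : ℝ
  bdd : ∀ i, ‖z i‖ ≤ C
  right : ∀ a, Tendsto (fun i => a * z i) u (𝓝 a)
  left : ∀ a, Tendsto (fun i => z i * a) u (𝓝 a)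

lemma UBAI.C_nonneg {A : Type*} [NonUnitalNormedRing A] (S : UBAI A) : 0 ≤ S.C := by
  obtain ⟨i⟩ : Nonempty S.I := (S.u.neBot.nonempty_of_mem univ_mem).to_type
  exact (norm_nonneg _).trans (S.bdd i)

lemma ubai_of_hasBAI {A : Type*} [NonUnitalNormedRing A] (h : HasBAI A) : Nonempty (UBAI A) := by
  obtain ⟨S, hS⟩ := h
  have : S.filter.NeBot := by
    let _ := S.dir
    let _ := S.ne
    exact (inferInstance : (atTop : Filter S.ι).NeBot)
  exact ⟨⟨S.ι, Ultrafilter.of S.filter, S.z, S.C, S.bdd,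
    fun a => (hS a).1.mono_left (Ultrafilter.of_le _),
    fun a => (hS a).2.mono_left (Ultrafilter.of_le _)⟩⟩

/-- opposite -/
def UBAI.op {A : Type*} [NonUnitalNormedRing A] (S : UBAI A) : UBAI Aᵐᵒᵖ where
  I := S.I
  u := S.u
  z i := MulOpposite.op (S.z i)
  C := S.C
  bdd i := S.bdd i
  right a := (MulOpposite.continuous_op.tendsto _).comp (S.left a.unop)
  left a := (MulOpposite.continuous_op.tendsto _).comp (S.right a.unop)

section
variable {A B T : Type*}
    [NonUnitalNormedRing A] [NormedSpace ℂ A] [NonUnitalNormedRing B] [NormedSpace ℂ B]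
    [NonUnitalNormedRing T] [NormedSpace ℂ T] [CompleteSpace T]

lemma ext_tensor (P : IsProjTensorProduct A B T) {E : Type*} [NormedAddCommGroup E]
    [NormedSpace ℂ E] {f g : T →L[ℂ] E} (h : ∀ a b, f (P.ι a b) = g (P.ι a b)) : f = g := by
  refine ContinuousLinearMap.ext_on P.dense_span ?_
  rintro _ ⟨p, rfl⟩
  exact h _ _

lemma ubai_tensor [IsScalarTower ℂ T T] [SMulCommClass ℂ T T]
    (P : IsProjTensorProduct A B T) (S : UBAI A) (S' : UBAI B) : Nonempty (UBAI T) := by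
  let l : Filter (S.I × S'.I) := (S.u : Filter S.I) ×ˢ (S'.u : Filter S'.I)
  have hb : ∀ i : S.I × S'.I, ‖P.ι (S.z i.1) (S'.z i.2)‖ ≤ S.C * S'.C := fun i =>
    (P.norm_ι _ _).trans (mul_le_mul (S.bdd _) (S'.bdd _) (norm_nonneg _) S.C_nonneg)
  have hcont : Continuous fun p : A × B => P.ι p.1 p.2 := by fun_prop
  refine ⟨⟨S.I × S'.I, Ultrafilter.of l, fun i => P.ι (S.z i.1) (S'.z i.2), S.C * S'.C, hb,
    fun t => Tendsto.mono_left ?_ (Ultrafilter.of_le l),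
    fun t => Tendsto.mono_left ?_ (Ultrafilter.of_le l)⟩⟩
  · refine tendsto_closure l (fun i => (ContinuousLinearMap.mul ℂ T).flip
      (P.ι (S.z i.1) (S'.z i.2))) (ContinuousLinearMap.id ℂ T) (S.C * S'.C) ?_ _ ?_ t
      (P.dense_span t)
    · intro i x
      refine (norm_mul_le _ _).trans ?_
      rw [mul_comm]
      gcongr
      exact hb i
    · rintro _ ⟨p, rfl⟩
      simp only [ContinuousLinearMap.flip_apply, ContinuousLinearMap.mul_apply', P.ι_mul,
        ContinuousLinearMap.id_apply]
      exact (hcont.tendsto (p.1, p.2)).comp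
        (((S.right p.1).comp tendsto_fst).prodMk_nhds ((S'.right p.2).comp tendsto_snd))
  · refine tendsto_closure l (fun i => (ContinuousLinearMap.mul ℂ T)
      (P.ι (S.z i.1) (S'.z i.2))) (ContinuousLinearMap.id ℂ T) (S.C * S'.C) ?_ _ ?_ t
      (P.dense_span t)
    · intro i x
      refine (norm_mul_le _ _).trans ?_
      gcongr
      exact hb i
    · rintro _ ⟨p, rfl⟩
      simp only [ContinuousLinearMap.mul_apply', P.ι_mul,
        ContinuousLinearMap.id_apply]
      exact (hcont.tendsto (p.1, p.2)).comp
        (((S.left p.1).comp tendsto_fst).prodMk_nhds ((S'.left p.2).comp tendsto_snd))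

end

section
variable {A X : Type*} [NonUnitalNormedRing A] [NormedSpace ℂ A]
    [NormedAddCommGroup X] [NormedSpace ℂ X]

/-- restriction of a bimodule to an invariant subspace -/
noncomputable def restr (σ : BanachBimodule A X) (p : Submodule ℂ X)
    (hL : ∀ a, ∀ x ∈ p, σ.L a x ∈ p) (hR : ∀ a, ∀ x ∈ p, σ.R a x ∈ p) : BanachBimodule A p where
  L := LinearMap.mkContinuous₂ (LinearMap.mk₂ ℂ (fun a (x : p) => (⟨σ.L a x, hL a x x.2⟩ : p))
      (by intros; ext; simp) (by intros; ext; simp) (by intros; ext; simp)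
      (by intros; ext; simp)) ‖σ.L‖ (fun a x => σ.L.le_opNorm₂ a x)
  R := LinearMap.mkContinuous₂ (LinearMap.mk₂ ℂ (fun a (x : p) => (⟨σ.R a x, hR a x x.2⟩ : p))
      (by intros; ext; simp) (by intros; ext; simp) (by intros; ext; simp)
      (by intros; ext; simp)) ‖σ.R‖ (fun a x => σ.R.le_opNorm₂ a x)
  L_mul a b := ContinuousLinearMap.ext fun x => Subtype.ext
    (DFunLike.congr_fun (σ.L_mul a b) (x : X))
  R_mul a b := ContinuousLinearMap.ext fun x => Subtype.ext
    (DFunLike.congr_fun (σ.R_mul a b) (x : X))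
  LR_comm a b x := Subtype.ext (σ.LR_comm a b x)

lemma restr_L (σ : BanachBimodule A X) (p : Submodule ℂ X)
    (hL : ∀ a, ∀ x ∈ p, σ.L a x ∈ p) (hR : ∀ a, ∀ x ∈ p, σ.R a x ∈ p) (a : A) (x : p) :
    (((restr σ p hL hR).L a x : p) : X) = σ.L a x := rfl

lemma restr_R (σ : BanachBimodule A X) (p : Submodule ℂ X)
    (hL : ∀ a, ∀ x ∈ p, σ.L a x ∈ p) (hR : ∀ a, ∀ x ∈ p, σ.R a x ∈ p) (a : A) (x : p) :
    (((restr σ p hL hR).R a x : p) : X) = σ.R a x := rfl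

/-- dual bimodule -/
noncomputable def dualB (σ : BanachBimodule A X) : BanachBimodule A (X →L[ℂ] ℂ) where
  L := (ContinuousLinearMap.compL ℂ X X ℂ).flip.comp σ.R
  R := (ContinuousLinearMap.compL ℂ X X ℂ).flip.comp σ.L
  L_mul a b := by ext; simp [σ.R_mul]
  R_mul a b := by ext; simp [σ.L_mul]
  LR_comm a b x := by ext; simp [σ.LR_comm]

lemma dualB_L (σ : BanachBimodule A X) (a : A) (f : X →L[ℂ] ℂ) (x : X) :
    (dualB σ).L a f x = f (σ.R a x) := rfl

lemma dualB_R (σ : BanachBimodule A X) (a : A) (f : X →L[ℂ] ℂ) (x : X) :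
    (dualB σ).R a f x = f (σ.L a x) := rfl

/-- For an amenable algebra, derivations into `W` become inner in the bidual. -/
lemma bidual_inner (hA : Amenable A) {W : Type} [NormedAddCommGroup W] [NormedSpace ℂ W]
    (σ : BanachBimodule A W) (D : A →L[ℂ] W)
    (hD : ∀ a b, D (a * b) = σ.L a (D b) + σ.R b (D a)) :
    ∃ F : (W →L[ℂ] ℂ) →L[ℂ] ℂ, ∀ a (z : W →L[ℂ] ℂ),
      z (D a) = F (z.comp (σ.L a)) - F (z.comp (σ.R a)) := by
  obtain ⟨F, hF⟩ := hA (W →L[ℂ] ℂ) inferInstance inferInstance inferInstance (dualB σ)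
    ((ContinuousLinearMap.apply ℂ ℂ : W →L[ℂ] (W →L[ℂ] ℂ) →L[ℂ] ℂ).comp D) (by
      intro a b z
      simp [hD, dualB_L, dualB_R])
  exact ⟨F, fun a z => hF a z⟩

end

section converse
variable {A B T : Type*}
    [NonUnitalNormedRing A] [NormedSpace ℂ A] [NonUnitalNormedRing B] [NormedSpace ℂ B]
    [NonUnitalNormedRing T] [NormedSpace ℂ T] [IsScalarTower ℂ T T] [SMulCommClass ℂ T T]
    [CompleteSpace T]

/-- extension of a multiplicative bilinear map to the tensor product -/
lemma lift_mul (P : IsProjTensorProduct A B T) {W : Type} [NormedAddCommGroup W]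
    [NormedSpace ℂ W] [CompleteSpace W] (φ : A →L[ℂ] B →L[ℂ] W →L[ℂ] W)
    (hφ : ∀ a c b d, φ (a * c) (b * d) = (φ a b).comp (φ c d)) :
    ∃ Φ : T →L[ℂ] W →L[ℂ] W, (∀ a b, Φ (P.ι a b) = φ a b) ∧
      ∀ s t, Φ (s * t) = (Φ s).comp (Φ t) := by
  obtain ⟨Φ, h, -⟩ := P.lift (W →L[ℂ] W) inferInstance inferInstance inferInstance φ
  refine ⟨Φ, h, fun s t => ?_⟩
  have h1 : ∀ a b, Φ.comp (ContinuousLinearMap.mul ℂ T (P.ι a b)) =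
      (ContinuousLinearMap.compL ℂ W W W (Φ (P.ι a b))).comp Φ := by
    intro a b
    apply ext_tensor P
    intro c d
    simp [P.ι_mul, h, hφ]
  have h2 : Φ.comp ((ContinuousLinearMap.mul ℂ T).flip t) =
      ((ContinuousLinearMap.compL ℂ W W W).flip (Φ t)).comp Φ := by
    apply ext_tensor P
    intro c d
    exact DFunLike.congr_fun (h1 c d) t
  exact DFunLike.congr_fun h2 s

lemma lift_mul_op (P : IsProjTensorProduct A B T) {W : Type} [NormedAddCommGroup W]
    [NormedSpace ℂ W] [CompleteSpace W] (φ : A →L[ℂ] B →L[ℂ] W →L[ℂ] W)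
    (hφ : ∀ a c b d, φ (a * c) (b * d) = (φ c d).comp (φ a b)) :
    ∃ Φ : T →L[ℂ] W →L[ℂ] W, (∀ a b, Φ (P.ι a b) = φ a b) ∧
      ∀ s t, Φ (s * t) = (Φ t).comp (Φ s) := by
  obtain ⟨Φ, h, -⟩ := P.lift (W →L[ℂ] W) inferInstance inferInstance inferInstance φ
  refine ⟨Φ, h, fun s t => ?_⟩
  have h1 : ∀ a b, Φ.comp (ContinuousLinearMap.mul ℂ T (P.ι a b)) =
      ((ContinuousLinearMap.compL ℂ W W W).flip (Φ (P.ι a b))).comp Φ := by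
    intro a b
    apply ext_tensor P
    intro c d
    simp [P.ι_mul, h, hφ]
  have h2 : Φ.comp ((ContinuousLinearMap.mul ℂ T).flip t) =
      (ContinuousLinearMap.compL ℂ W W W (Φ t)).comp Φ := by
    apply ext_tensor P
    intro c d
    exact DFunLike.congr_fun (h1 c d) t
  exact DFunLike.congr_fun h2 s

/-- bimodule over a tensor product from commuting bimodules -/
lemma tensor_bimod (P : IsProjTensorProduct A B T) {W : Type} [NormedAddCommGroup W]
    [NormedSpace ℂ W] [CompleteSpace W] (pL pR : A →L[ℂ] W →L[ℂ] W) (qL qR : B →L[ℂ] W →L[ℂ] W)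
    (hpL : ∀ a c w, pL (a * c) w = pL a (pL c w)) (hpR : ∀ a c w, pR (a * c) w = pR c (pR a w))
    (hqL : ∀ a c w, qL (a * c) w = qL a (qL c w)) (hqR : ∀ a c w, qR (a * c) w = qR c (qR a w))
    (hLL : ∀ a b w, pL a (qL b w) = qL b (pL a w)) (hRR : ∀ a b w, pR a (qR b w) = qR b (pR a w))
    (h1 : ∀ a b w, pL a (qR b w) = qR b (pL a w)) (h2 : ∀ a b w, pR a (qL b w) = qL b (pR a w))
    (h3 : ∀ a b w, pL a (pR b w) = pR b (pL a w)) (h4 : ∀ a b w, qL a (qR b w) = qR b (qL a w)) :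
    ∃ τ : BanachBimodule T W, (∀ a b w, τ.L (P.ι a b) w = pL a (qL b w)) ∧
      (∀ a b w, τ.R (P.ι a b) w = pR a (qR b w)) := by
  obtain ⟨ΦL, hΦL, hΦLm⟩ := lift_mul P
    ((ContinuousLinearMap.compL ℂ W W W).bilinearComp pL qL) (by
    intro a c b d
    ext w
    simp [hpL, hqL, hLL])
  obtain ⟨ΦR, hΦR, hΦRm⟩ := lift_mul_op P
    ((ContinuousLinearMap.compL ℂ W W W).bilinearComp pR qR) (by
    intro a c b d
    ext w
    simp [hpR, hqR, hRR])
  have hcomm : ∀ s t w, ΦR t (ΦL s w) = ΦL s (ΦR t w) := by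
    intro s t w
    have e1 : ∀ a b, (ΦR.flip (ΦL (P.ι a b) w)) = (ΦL (P.ι a b)).comp (ΦR.flip w) := by
      intro a b
      apply ext_tensor P
      intro c d
      simp [hΦR, hΦL]
      rw [← h1, ← h3, ← h4, h2]
    have e2 : (ΦR t).comp (ΦL.flip w) = ΦL.flip (ΦR t w) := by
      apply ext_tensor P
      intro c d
      exact DFunLike.congr_fun (e1 c d) t
    exact DFunLike.congr_fun e2 s
  exact ⟨⟨ΦL, ΦR, hΦLm, hΦRm, hcomm⟩, fun a b w => by simp [hΦL], fun a b w => by simp [hΦR]⟩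

set_option synthInstance.maxHeartbeats 400000 in
set_option maxHeartbeats 1000000 in
/-- key converse: a nontrivial small left `B`-module allows descent. -/
lemma converse_key (P : IsProjTensorProduct A B T) (S : UBAI B) (hT : Amenable T)
    {E : Type} [NormedAddCommGroup E] [NormedSpace ℂ E] [CompleteSpace E]
    (π : B →L[ℂ] E →L[ℂ] E) (hπ : ∀ a b, π (a * b) = (π a).comp (π b)) (hne : π ≠ 0)
    {X : Type} [NormedAddCommGroup X] [NormedSpace ℂ X]
    (σ : BanachBimodule A X) (D : A →L[ℂ] (X →L[ℂ] ℂ)) (hD : IsDualDerivation σ D) :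
    IsInnerDualDerivation σ D := by
  -- the operators `w ↦ π b ∘ w (· a)` and `w ↦ w (a ·) ∘ π b` on `X →L (E →L E)`
  let cE := ContinuousLinearMap.compL ℂ E E E
  let cX := ContinuousLinearMap.compL ℂ X (E →L[ℂ] E) (E →L[ℂ] E)
  let rX := (ContinuousLinearMap.compL ℂ X X (E →L[ℂ] E)).flip
  obtain ⟨τ, hτL, hτR⟩ := tensor_bimod P (W := X →L[ℂ] E →L[ℂ] E) (rX.comp σ.R) (rX.comp σ.L)
    (cX.comp (cE.comp π)) (cX.comp (cE.flip.comp π))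
    (by intros; ext; simp [rX, σ.R_mul]) (by intros; ext; simp [rX, σ.L_mul])
    (by intros; ext; simp [cX, cE, hπ]) (by intros; ext; simp [cX, cE, hπ])
    (by intros; ext; simp [cX, cE, rX]) (by intros; ext; simp [cX, cE, rX])
    (by intros; ext; simp [cX, cE, rX]) (by intros; ext; simp [cX, cE, rX])
    (by intros; ext; simp [rX, σ.LR_comm]) (by intros; ext; simp [cX, cE])
  have hτL' : ∀ a b w x y, τ.L (P.ι a b) w x y = π b (w (σ.R a x) y) := by
    intro a b w x y
    rw [hτL]
    rfl
  have hτR' : ∀ a b w x y, τ.R (P.ι a b) w x y = w (σ.L a x) (π b y) := by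
    intro a b w x y
    rw [hτR]
    rfl
  -- the derivation
  let δ : A →L[ℂ] B →L[ℂ] (X →L[ℂ] E →L[ℂ] E) :=
    ((ContinuousLinearMap.compL ℂ X ℂ (E →L[ℂ] E)).comp
      ((ContinuousLinearMap.toSpanSingletonCLE.toContinuousLinearMap :
        (E →L[ℂ] E) →L[ℂ] (ℂ →L[ℂ] (E →L[ℂ] E))).comp π)).flip.comp D
  have δ_apply : ∀ a b x y, δ a b x y = D a x • π b y := fun _ _ _ _ => rfl
  obtain ⟨Δ, hΔ, -⟩ := P.lift (X →L[ℂ] E →L[ℂ] E) inferInstance inferInstance inferInstance δ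
  have hΔd : ∀ s t, Δ (s * t) = τ.L s (Δ t) + τ.R t (Δ s) := by
    intro s t
    have h1 : ∀ a b, Δ.comp (ContinuousLinearMap.mul ℂ T (P.ι a b)) =
        (τ.L (P.ι a b)).comp Δ + τ.R.flip (Δ (P.ι a b)) := by
      intro a b
      apply ext_tensor P
      intro c d
      ext x y
      simp [P.ι_mul, hΔ, hτL', hτR', δ_apply, hD a c x, hπ, add_smul]
    have h2 : Δ.comp ((ContinuousLinearMap.mul ℂ T).flip t) =
        τ.L.flip (Δ t) + (τ.R t).comp Δ := by
      apply ext_tensor P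
      intro c d
      exact DFunLike.congr_fun (h1 c d) t
    exact DFunLike.congr_fun h2 s
  obtain ⟨F, hF⟩ := bidual_inner hT τ Δ hΔd
  -- test functionals
  let aE : E →L[ℂ] (E →L[ℂ] E) →L[ℂ] E := ContinuousLinearMap.apply ℂ E
  let aX : X →L[ℂ] (X →L[ℂ] E →L[ℂ] E) →L[ℂ] E →L[ℂ] E := ContinuousLinearMap.apply ℂ (E →L[ℂ] E)
  let ev : X → E → (E →L[ℂ] ℂ) → ((X →L[ℂ] E →L[ℂ] E) →L[ℂ] ℂ) := fun x y f =>
    f.comp ((aE y).comp (aX x))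
  let evf : X → E → ((E →L[ℂ] ℂ) →L[ℂ] ((X →L[ℂ] E →L[ℂ] E) →L[ℂ] ℂ)) := fun x y =>
    (ContinuousLinearMap.compL ℂ (X →L[ℂ] E →L[ℂ] E) E ℂ).flip ((aE y).comp (aX x))
  let evy : X → (E →L[ℂ] ℂ) → (E →L[ℂ] ((X →L[ℂ] E →L[ℂ] E) →L[ℂ] ℂ)) := fun x f =>
    ((ContinuousLinearMap.compL ℂ (X →L[ℂ] E →L[ℂ] E) (E →L[ℂ] E) ℂ).flip (aX x)).comp
      ((ContinuousLinearMap.compL ℂ (E →L[ℂ] E) E ℂ f).comp aE)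
  let evx : E → (E →L[ℂ] ℂ) → (X →L[ℂ] ((X →L[ℂ] E →L[ℂ] E) →L[ℂ] ℂ)) := fun y f =>
    (ContinuousLinearMap.compL ℂ (X →L[ℂ] E →L[ℂ] E) (E →L[ℂ] E) ℂ (f.comp (aE y))).comp aX
  have ev_apply : ∀ x y f w, ev x y f w = f (w x y) := fun _ _ _ _ => rfl
  have key : ∀ a b x y f, D a x * f (π b y) =
      F (ev (σ.R a x) y (f.comp (π b))) - F (ev (σ.L a x) (π b y) f) := by
    intro a b x y f
    have h := hF (P.ι a b) (ev x y f)
    have e1 : (ev x y f).comp (τ.L (P.ι a b)) = ev (σ.R a x) y (f.comp (π b)) := by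
      ext w
      simp [ev_apply, hτL']
    have e2 : (ev x y f).comp (τ.R (P.ι a b)) = ev (σ.L a x) (π b y) f := by
      ext w
      simp [ev_apply, hτR']
    rw [e1, e2] at h
    rw [← h, ev_apply, hΔ, δ_apply]
    simp
  -- nontriviality
  obtain ⟨b2, y2, h2⟩ : ∃ b y, π b y ≠ 0 := by
    by_contra hcon
    push Not at hcon
    exact hne (by ext b y; simpa using hcon b y)
  obtain ⟨j, hj⟩ : ∃ j, π (b2 * S.z j) y2 ≠ 0 := by
    by_contra hcon
    push Not at hcon
    have hc : Continuous fun b => π b y2 := by fun_prop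
    have := (hc.tendsto b2).comp (S.right b2)
    exact h2 (tendsto_nhds_unique this (by simp [Function.comp_def, hcon]))
  obtain ⟨f0, hf0⟩ : ∃ f0 : E →L[ℂ] ℂ, f0 (π (b2 * S.z j) y2) ≠ 0 := by
    obtain ⟨g, _, hg⟩ := exists_dual_vector ℂ _ (norm_ne_zero_iff.2 hj)
    exact ⟨g, by rw [hg]; simpa using hj⟩
  let y := π (S.z j) y2
  let f := f0.comp (π b2)
  have hfy : f y ≠ 0 := by simpa [f, y, hπ] using hf0
  have main : ∀ a x, D a x * f y = F (ev (σ.R a x) y f) - F (ev (σ.L a x) y f) := by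
    intro a x
    have t1 : Tendsto (fun k => π (S.z k) y) S.u (𝓝 y) := by
      have hc : Continuous fun b => π b y2 := by fun_prop
      have := (hc.tendsto _).comp (S.left (S.z j))
      simpa [Function.comp_def, y, hπ] using this
    have t2 : Tendsto (fun k => f.comp (π (S.z k))) S.u (𝓝 f) := by
      have hc : Continuous fun b => f0.comp (π b) := by fun_prop
      have := (hc.tendsto _).comp (S.right b2)
      simpa [Function.comp_def, f, hπ, ContinuousLinearMap.comp_assoc] using this
    have t3 : Tendsto (fun k => D a x * f (π (S.z k) y)) S.u (𝓝 (D a x * f y)) :=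
      ((f.continuous.tendsto _).comp t1).const_mul _
    have t4 : Tendsto (fun k => F (ev (σ.R a x) y (f.comp (π (S.z k))))) S.u
        (𝓝 (F (ev (σ.R a x) y f))) :=
      ((F.comp (evf (σ.R a x) y)).continuous.tendsto _).comp t2
    have t5 : Tendsto (fun k => F (ev (σ.L a x) (π (S.z k) y) f)) S.u
        (𝓝 (F (ev (σ.L a x) y f))) :=
      ((F.comp (evy (σ.L a x) f)).continuous.tendsto _).comp t1
    refine tendsto_nhds_unique t3 ?_
    simp only [key]
    exact t4.sub t5
  refine ⟨(f y)⁻¹ • F.comp (evx y f), fun a x => ?_⟩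
  have := main a x
  have h3 : D a x = (f y)⁻¹ * (D a x * f y) := by field_simp
  rw [h3, this, mul_sub]
  rfl

lemma converse_of_trivial {X : Type} [NormedAddCommGroup X] [NormedSpace ℂ X] (S : UBAI A)
    (σ : BanachBimodule A X) (D : A →L[ℂ] (X →L[ℂ] ℂ)) (hD : IsDualDerivation σ D)
    (hL : σ.L = 0) (hR : σ.R = 0) : IsInnerDualDerivation σ D := by
  refine ⟨0, fun a x => ?_⟩
  have h0 : ∀ b, D (a * b) x = 0 := fun b => by simp [hD a b x, hL, hR]
  have hc : Continuous fun b => D b x := by fun_prop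
  have := (hc.tendsto a).comp (S.right a)
  simpa using tendsto_nhds_unique this (by simp [Function.comp_def, h0])

lemma dual_ne {X : Type} [NormedAddCommGroup X] [NormedSpace ℂ X] 
    (R : A →L[ℂ] X →L[ℂ] X) (hR : R ≠ 0) : (ContinuousLinearMap.compL ℂ X X ℂ).flip.comp R ≠ 0 := by
  intro h
  apply hR
  ext a x
  by_contra hne
  obtain ⟨g, _, hg⟩ := exists_dual_vector ℂ (R a x) (norm_ne_zero_iff.2 hne)
  have := DFunLike.congr_fun (DFunLike.congr_fun (DFunLike.congr_fun h a) g) x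
  have h' : g (R a x) = 0 := this
  rw [hg] at h'
  simp at h'
  exact hne h'

end converse

lemma converse1 {A T : Type*} [NonUnitalNormedRing A] [NormedSpace ℂ A]
    [NonUnitalNormedRing T] [NormedSpace ℂ T] [IsScalarTower ℂ T T] [SMulCommClass ℂ T T]
    [CompleteSpace T] (P : IsProjTensorProduct A A T) (S : UBAI A) (hT : Amenable T) :
    Amenable A := by
  intro X _ _ _ σ D hD
  by_cases hL : σ.L = 0
  · by_cases hR : σ.R = 0
    · exact converse_of_trivial S σ D hD hL hR
    · exact converse_key P S hT (dualB σ).L (dualB σ).L_mul (dual_ne σ.R hR) σ D hD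
  · exact converse_key P S hT σ.L σ.L_mul hL σ D hD

lemma converse2 {A T : Type*} [NonUnitalNormedRing A] [NormedSpace ℂ A]
    [NonUnitalNormedRing T] [NormedSpace ℂ T] [IsScalarTower ℂ T T] [SMulCommClass ℂ T T]
    [CompleteSpace T] (P : IsProjTensorProduct A Aᵐᵒᵖ T) (S : UBAI A) (hT : Amenable T) :
    Amenable A := by
  intro X _ _ _ σ D hD
  let q : Aᵐᵒᵖ →L[ℂ] A := (MulOpposite.opContinuousLinearEquiv ℂ (M := A)).symm
  have hq : ∀ a, q a = a.unop := fun _ => rfl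
  by_cases hR : σ.R = 0
  · by_cases hL : σ.L = 0
    · exact converse_of_trivial S σ D hD hL hR
    · refine converse_key P S.op hT ((dualB σ).R.comp q) ?_ ?_ σ D hD
      · intro a b
        simp [hq, (dualB σ).R_mul]
      · intro h
        refine dual_ne σ.L hL ?_
        ext a x
        exact DFunLike.congr_fun (DFunLike.congr_fun (DFunLike.congr_fun h (op a)) x) _
  · refine converse_key P S.op hT (σ.R.comp q) ?_ ?_ σ D hD
    · intro a b
      simp [hq, σ.R_mul]
    · intro h
      apply hR
      ext a x
      exact DFunLike.congr_fun (DFunLike.congr_fun h (op a)) x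


section reduction
variable {T : Type*} [NonUnitalNormedRing T] [NormedSpace ℂ T]

/-- essential (neo-unital up to closure) bimodules -/
def Ess {X : Type*} [NormedAddCommGroup X] [NormedSpace ℂ X] (σ : BanachBimodule T X) : Prop :=
  (∀ x, x ∈ closure (Set.range fun p : T × X => σ.L p.1 p.2)) ∧
  (∀ x, x ∈ closure (Set.range fun p : T × X => σ.R p.1 p.2))

/-- a derivation vanishing on the essential part is inner -/
lemma inner_of_vanish {X : Type} [NormedAddCommGroup X] [NormedSpace ℂ X] (S : UBAI T)
    (σ : BanachBimodule T X) (D : T →L[ℂ] (X →L[ℂ] ℂ)) (hD : IsDualDerivation σ D)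
    (h0 : ∀ r s t x, D r (σ.L s (σ.R t x)) = 0) : IsInnerDualDerivation σ D := by
  have hC := S.C_nonneg
  obtain ⟨ψ, hψ⟩ := lim1 (S.u : Filter S.I) (fun k => D (S.z k)) (‖D‖ * S.C)
    (fun i x => (D.le_opNorm₂ _ _).trans (by gcongr; exact S.bdd i))
    (fun x => exists_lim_ultra S.u _ (‖D‖ * S.C * ‖x‖)
      (fun i => (D.le_opNorm₂ _ _).trans (by gcongr; exact S.bdd i)))
  have cD : ∀ x, Continuous fun t => D t x := fun x => by fun_prop
  have cL : ∀ x, Continuous fun t => σ.L t x := fun x => by fun_prop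
  have cR : ∀ x, Continuous fun t => σ.R t x := fun x => by fun_prop
  -- step 1
  have s1 : ∀ t r x, D t (σ.L r x) = ψ (σ.L (t * r) x) := by
    intro t r x
    have e : ∀ k, D (S.z k * t) (σ.L r x) = D (S.z k) (σ.L (t * r) x) := by
      intro k
      rw [hD, σ.LR_comm, h0, zero_add, σ.L_mul]
      rfl
    have t1 := ((cD (σ.L r x)).tendsto _).comp (S.left t)
    refine tendsto_nhds_unique t1 ?_
    simp only [Function.comp_def, e]
    exact hψ _
  have s2 : ∀ t x, D t x = ψ (σ.R t x) + ψ (σ.L t x) := by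
    intro t x
    have t1 := ((cD x).tendsto _).comp (S.right t)
    have t2 : Tendsto (fun k => ψ (σ.L (t * S.z k) x)) S.u (𝓝 (ψ (σ.L t x))) :=
      ((ψ.continuous.comp (cL x)).tendsto _).comp (S.right t)
    refine tendsto_nhds_unique t1 ?_
    simp only [Function.comp_def, hD t _ x, s1]
    exact (hψ _).add t2
  have s3 : ∀ s t x, ψ (σ.L s (σ.R t x)) = 0 := by
    intro s t x
    refine tendsto_nhds_unique (hψ _) ?_
    simp [h0]
  obtain ⟨θ₁, hθ₁⟩ := lim1 (S.u : Filter S.I) (fun k => ψ.comp (σ.R (S.z k)))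
    (‖ψ‖ * (‖σ.R‖ * S.C))
    (fun i x => (ψ.le_opNorm _).trans (by
      rw [mul_assoc]; gcongr
      exact (σ.R.le_opNorm₂ _ _).trans (by gcongr; exact S.bdd i)))
    (fun x => exists_lim_ultra S.u _ (‖ψ‖ * (‖σ.R‖ * S.C * ‖x‖))
      (fun i => (ψ.le_opNorm _).trans (by
      gcongr
      exact (σ.R.le_opNorm₂ _ _).trans (by gcongr; exact S.bdd i))))
  obtain ⟨θ₂, hθ₂⟩ := lim1 (S.u : Filter S.I) (fun k => ψ.comp (σ.L (S.z k)))
    (‖ψ‖ * (‖σ.L‖ * S.C))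
    (fun i x => (ψ.le_opNorm _).trans (by
      rw [mul_assoc]; gcongr
      exact (σ.L.le_opNorm₂ _ _).trans (by gcongr; exact S.bdd i)))
    (fun x => exists_lim_ultra S.u _ (‖ψ‖ * (‖σ.L‖ * S.C * ‖x‖))
      (fun i => (ψ.le_opNorm _).trans (by
      gcongr
      exact (σ.L.le_opNorm₂ _ _).trans (by gcongr; exact S.bdd i))))
  have a1 : ∀ t x, θ₁ (σ.R t x) = ψ (σ.R t x) := by
    intro t x
    refine tendsto_nhds_unique (hθ₁ _) ?_
    have : ∀ k, ψ.comp (σ.R (S.z k)) (σ.R t x) = ψ (σ.R (t * S.z k) x) := fun k => by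
      rw [σ.R_mul]; rfl
    simp only [this]
    exact ((ψ.continuous.comp (cR x)).tendsto _).comp (S.right t)
  have a2 : ∀ t x, θ₂ (σ.L t x) = ψ (σ.L t x) := by
    intro t x
    refine tendsto_nhds_unique (hθ₂ _) ?_
    have : ∀ k, ψ.comp (σ.L (S.z k)) (σ.L t x) = ψ (σ.L (S.z k * t) x) := fun k => by
      rw [σ.L_mul]; rfl
    simp only [this]
    exact ((ψ.continuous.comp (cL x)).tendsto _).comp (S.left t)
  have a3 : ∀ t x, θ₁ (σ.L t x) = 0 := by
    intro t x
    refine tendsto_nhds_unique (hθ₁ _) ?_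
    simp [σ.LR_comm, s3]
  have a4 : ∀ t x, θ₂ (σ.R t x) = 0 := by
    intro t x
    refine tendsto_nhds_unique (hθ₂ _) ?_
    simp [s3]
  refine ⟨θ₁ - θ₂, fun t x => ?_⟩
  rw [s2]
  simp [a1, a2, a3, a4]

lemma sub_inner {X : Type*} [NormedAddCommGroup X] [NormedSpace ℂ X]
    (σ : BanachBimodule T X) (D : T →L[ℂ] (X →L[ℂ] ℂ)) (hD : IsDualDerivation σ D)
    (g : X →L[ℂ] ℂ) : ∃ D' : T →L[ℂ] (X →L[ℂ] ℂ), IsDualDerivation σ D' ∧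
      (∀ t x, D' t x = D t x - (g (σ.R t x) - g (σ.L t x))) ∧
      (IsInnerDualDerivation σ D' → IsInnerDualDerivation σ D) := by
  let D' : T →L[ℂ] (X →L[ℂ] ℂ) := D - ((ContinuousLinearMap.compL ℂ X X ℂ g).comp σ.R -
    (ContinuousLinearMap.compL ℂ X X ℂ g).comp σ.L)
  have h : ∀ t x, D' t x = D t x - (g (σ.R t x) - g (σ.L t x)) := fun _ _ => rfl
  refine ⟨D', ?_, h, ?_⟩
  · intro a b x
    simp only [h, hD a b x, σ.L_mul, σ.R_mul, ContinuousLinearMap.comp_apply, σ.LR_comm]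
    ring
  · rintro ⟨f, hf⟩
    refine ⟨f + g, fun t x => ?_⟩
    have := hf t x
    rw [h] at this
    simp only [add_apply]
    linear_combination this

lemma reduce (S : UBAI T)
    (h : ∀ (X : Type) (_ : NormedAddCommGroup X) (_ : NormedSpace ℂ X) (_ : CompleteSpace X)
      (σ : BanachBimodule T X) (D : T →L[ℂ] (X →L[ℂ] ℂ)), Ess σ →
      IsDualDerivation σ D → IsInnerDualDerivation σ D) : Amenable T := by
  intro X _ _ _ σ D hD
  have hC := S.C_nonneg
  let G : Set X := {y | ∃ s t x, y = σ.L s (σ.R t x)}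
  let p : Submodule ℂ X := (Submodule.span ℂ G).topologicalClosure
  have hpc : CompleteSpace p := (Submodule.isClosed_topologicalClosure _).completeSpace_coe
  have hG : G ⊆ p := fun y hy => Submodule.le_topologicalClosure _ (Submodule.subset_span hy)
  have inv : ∀ f : X →L[ℂ] X, (∀ y ∈ G, f y ∈ G) → ∀ x ∈ p, f x ∈ p := by
    intro f hf x hx
    have : Submodule.span ℂ G ≤ (Submodule.span ℂ G).comap f.toLinearMap :=
      Submodule.span_le.2 fun y hy => Submodule.subset_span (hf y hy)
    exact map_mem_closure f.continuous hx fun y hy => this hy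
  have hL : ∀ a, ∀ x ∈ p, σ.L a x ∈ p := fun a => inv _ (by
    rintro _ ⟨s, t, x, rfl⟩
    exact ⟨a * s, t, x, by rw [σ.L_mul]; rfl⟩)
  have hR : ∀ a, ∀ x ∈ p, σ.R a x ∈ p := fun a => inv _ (by
    rintro _ ⟨s, t, x, rfl⟩
    exact ⟨s, t * a, x, by rw [σ.R_mul, σ.LR_comm]; rfl⟩)
  have hess : Ess (restr σ p hL hR) := by
    have cL : ∀ x, Continuous fun t => σ.L t x := fun x => by fun_prop
    have cR : ∀ x, Continuous fun t => σ.R t x := fun x => by fun_prop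
    constructor
    · intro x
      have : Tendsto (fun k => (restr σ p hL hR).L (S.z k) x) S.u (𝓝 x) := by
        rw [tendsto_subtype_rng]
        refine tendsto_closure (S.u : Filter S.I) (fun k => σ.L (S.z k))
          (ContinuousLinearMap.id ℂ X) (‖σ.L‖ * S.C)
          (fun i x => (σ.L.le_opNorm₂ _ _).trans (by gcongr; exact S.bdd i)) G ?_ x x.2
        rintro _ ⟨s, t, x, rfl⟩
        have e : ∀ k, σ.L (S.z k) (σ.L s (σ.R t x)) = σ.L (S.z k * s) (σ.R t x) := fun k => by
          rw [σ.L_mul]; rfl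
        simp only [e]
        exact ((cL _).tendsto _).comp (S.left s)
      exact mem_closure_of_tendsto this (Eventually.of_forall fun k => ⟨(S.z k, x), rfl⟩)
    · intro x
      have : Tendsto (fun k => (restr σ p hL hR).R (S.z k) x) S.u (𝓝 x) := by
        rw [tendsto_subtype_rng]
        refine tendsto_closure (S.u : Filter S.I) (fun k => σ.R (S.z k))
          (ContinuousLinearMap.id ℂ X) (‖σ.R‖ * S.C)
          (fun i x => (σ.R.le_opNorm₂ _ _).trans (by gcongr; exact S.bdd i)) G ?_ x x.2
        rintro _ ⟨s, t, x, rfl⟩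
        have e : ∀ k, σ.R (S.z k) (σ.L s (σ.R t x)) = σ.L s (σ.R (t * S.z k) x) := fun k => by
          rw [σ.R_mul, σ.LR_comm]; rfl
        simp only [e]
        exact (((σ.L s).continuous.comp (cR x)).tendsto _).comp (S.right t)
      exact mem_closure_of_tendsto this (Eventually.of_forall fun k => ⟨(S.z k, x), rfl⟩)
  obtain ⟨f, hf⟩ := h p inferInstance inferInstance hpc (restr σ p hL hR)
    (((ContinuousLinearMap.compL ℂ p X ℂ).flip p.subtypeL).comp D) hess
    (fun a b x => hD a b x)
  obtain ⟨g, hg, -⟩ := exists_extension_norm_eq p f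
  obtain ⟨D', hD', hD'e, hfin⟩ := sub_inner σ D hD g
  refine hfin (inner_of_vanish S σ D' hD' fun r s t x => ?_)
  have hy : σ.L s (σ.R t x) ∈ p := hG ⟨s, t, x, rfl⟩
  have := hf r ⟨_, hy⟩
  rw [hD'e, sub_eq_zero]
  rw [← hg, ← hg] at this
  exact this

end reduction


section forward

lemma ext_span {X Y : Type*} [NormedAddCommGroup X] [NormedSpace ℂ X]
    [NormedAddCommGroup Y] [NormedSpace ℂ Y] (G : Set X)
    (hd : ∀ x, x ∈ closure (Submodule.span ℂ G : Set X)) {f g : X →L[ℂ] Y}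
    (h : ∀ x ∈ G, f x = g x) (x : X) : f x = g x := by
  have : f = g := ContinuousLinearMap.ext_on (s := G) hd h
  rw [this]

lemma half {J A B X : Type*} [NormedAddCommGroup A] [NormedSpace ℂ A]
    [NormedAddCommGroup X] [NormedSpace ℂ X] [CompleteSpace X]
    (u : Filter J) [u.NeBot] (f : J → B) (s : A → B → X →L[ℂ] X)
    (Ψ : J → A →L[ℂ] X →L[ℂ] X) (hΨ : ∀ j a, Ψ j a = s a (f j)) (C : ℝ)
    (hC : ∀ i v x, ‖Ψ i v x‖ ≤ C * ‖v‖ * ‖x‖)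
    (mA : A → A → A) (mB : B → B → B)
    (hs : ∀ a b c d x, s a b (s c d x) = s (mA a c) (mB b d) x)
    (hf : ∀ a d x, Tendsto (fun j => s a (mB (f j) d) x) u (𝓝 (s a d x)))
    (hd : ∀ x, x ∈ closure (Submodule.span ℂ
      (Set.range fun p : A × B × X => s p.1 p.2.1 p.2.2) : Set X))
    (hass : ∀ a b c, mA (mA a b) c = mA a (mA b c)) :
    ∃ lam : A →L[ℂ] X →L[ℂ] X,
      (∀ a x, Tendsto (fun j => s a (f j) x) u (𝓝 (lam a x))) ∧
      (∀ a c d x, lam a (s c d x) = s (mA a c) d x) ∧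
      (∀ a b x, lam (mA a b) x = lam a (lam b x)) := by
  obtain ⟨lam, hl⟩ := lim2 u Ψ C hC (fun a x => exists_lim_closure u (fun j => Ψ j a) (C * ‖a‖)
    (fun i x => hC i a x) _ (by
      rintro _ ⟨⟨c, d, y⟩, rfl⟩
      refine ⟨s (mA a c) d y, ?_⟩
      simp only [hΨ, hs]
      exact hf _ _ _) x (hd x))
  simp only [hΨ] at hl
  have h2 : ∀ a c d x, lam a (s c d x) = s (mA a c) d x := by
    intro a c d x
    refine tendsto_nhds_unique (hl _ _) ?_
    simp only [hs]
    exact hf _ _ _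
  refine ⟨lam, hl, h2, fun a b x => ?_⟩
  refine ext_span _ hd (f := lam (mA a b)) (g := (lam a).comp (lam b)) ?_ x
  rintro _ ⟨⟨c, d, y⟩, rfl⟩
  simp [h2, hass]

lemma comm_lim {I J X : Type*} [NormedAddCommGroup X] [NormedSpace ℂ X]
    (u : Filter I) [u.NeBot] (v : Filter J) [v.NeBot] (α : I → X →L[ℂ] X) (β : J → X →L[ℂ] X)
    (α' β' : X →L[ℂ] X) (hα : ∀ x, Tendsto (fun i => α i x) u (𝓝 (α' x)))
    (hβ : ∀ x, Tendsto (fun i => β i x) v (𝓝 (β' x)))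
    (h : ∀ i j x, α i (β j x) = β j (α i x)) (x : X) : α' (β' x) = β' (α' x) := by
  have h1 : ∀ i x, α i (β' x) = β' (α i x) := by
    intro i x
    refine tendsto_nhds_unique (((α i).continuous.tendsto _).comp (hβ x)) ?_
    simp only [Function.comp_def, h]
    exact hβ _
  refine tendsto_nhds_unique (hα _) ?_
  simp only [h1]
  exact (β'.continuous.tendsto _).comp (hα x)

lemma lim_der {A B X : Type*} [NonUnitalNormedRing A] [NonUnitalNormedRing B]
    [NormedAddCommGroup X] [NormedSpace ℂ X] (S' : UBAI B)
    (δ : A → B → X →L[ℂ] ℂ) (sL sR : A → B → X →L[ℂ] X)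
    (hδ : ∀ a b c d x, δ (a * c) (b * d) x = δ c d (sR a b x) + δ a b (sL c d x))
    (hc : ∀ a x, Continuous fun b => δ a b x)
    (lam rho : A → X →L[ℂ] X) (dA : A → X →L[ℂ] ℂ)
    (hl : ∀ a x, Tendsto (fun j => sL a (S'.z j) x) S'.u (𝓝 (lam a x)))
    (hr : ∀ a x, Tendsto (fun j => sR a (S'.z j) x) S'.u (𝓝 (rho a x)))
    (hd : ∀ a x, Tendsto (fun j => δ a (S'.z j) x) S'.u (𝓝 (dA a x))) (a c : A) (x : X) :
    dA (a * c) x = dA c (rho a x) + dA a (lam c x) := by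
  have h1 : ∀ j, δ (a * c) (S'.z j) x = dA c (sR a (S'.z j) x) + δ a (S'.z j) (lam c x) := by
    intro j
    refine tendsto_nhds_unique (((hc (a * c) x).tendsto _).comp (S'.right (S'.z j))) ?_
    simp only [Function.comp_def, hδ]
    exact (hd _ _).add (((δ a (S'.z j)).continuous.tendsto _).comp (hl _ _))
  refine tendsto_nhds_unique (hd _ _) ?_
  simp only [h1]
  exact (((dA c).continuous.tendsto _).comp (hr _ _)).add (hd _ _)

lemma pull_back {B : Type*} [NonUnitalNormedRing B] [NormedSpace ℂ B] (hB : Amenable B)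
    {W : Type} {X : Type*} [NormedAddCommGroup W] [NormedSpace ℂ W]
    [NormedAddCommGroup X] [NormedSpace ℂ X] (j : W →L[ℂ] X →L[ℂ] ℂ)
    (τ : BanachBimodule B W) (D : B →L[ℂ] W)
    (hD : ∀ a b, D (a * b) = τ.L a (D b) + τ.R b (D a)) :
    ∃ h : X →L[ℂ] ℂ, (∀ x y, (∀ w, j w x = j w y) → h x = h y) ∧
      ∀ b x y z, (∀ w, j w y = j (τ.L b w) x) → (∀ w, j w z = j (τ.R b w) x) →
        j (D b) x = h y - h z := by
  obtain ⟨F, hF⟩ := bidual_inner hB τ D hD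
  refine ⟨F.comp j.flip, fun x y h => ?_, fun b x y z hy hz => ?_⟩
  · have : j.flip x = j.flip y := ContinuousLinearMap.ext h
    simp [this]
  · have e1 : j.flip y = (j.flip x).comp (τ.L b) := ContinuousLinearMap.ext hy
    have e2 : j.flip z = (j.flip x).comp (τ.R b) := ContinuousLinearMap.ext hz
    rw [ContinuousLinearMap.comp_apply, ContinuousLinearMap.comp_apply, e1, e2, ← hF]
    rfl

variable {A B T : Type*}
    [NonUnitalNormedRing A] [NormedSpace ℂ A] [NonUnitalNormedRing B] [NormedSpace ℂ B]
    [NonUnitalNormedRing T] [NormedSpace ℂ T] [CompleteSpace T]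

lemma dense_of_ess (P : IsProjTensorProduct A B T) {X : Type*} [NormedAddCommGroup X]
    [NormedSpace ℂ X] (L : T →L[ℂ] X →L[ℂ] X)
    (h : ∀ x, x ∈ closure (Set.range fun p : T × X => L p.1 p.2)) (x : X) :
    x ∈ closure (Submodule.span ℂ
      (Set.range fun p : A × B × X => L (P.ι p.1 p.2.1) p.2.2) : Set X) := by
  set G := Set.range fun p : A × B × X => L (P.ι p.1 p.2.1) p.2.2
  have : closure (Set.range fun p : T × X => L p.1 p.2) ⊆
      closure (Submodule.span ℂ G : Set X) := by
    refine closure_minimal ?_ isClosed_closure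
    rintro _ ⟨⟨t, y⟩, rfl⟩
    have hle : Submodule.span ℂ (Set.range fun p : A × B => P.ι p.1 p.2) ≤
        (Submodule.span ℂ G).comap (L.flip y).toLinearMap := Submodule.span_le.2 (by
      rintro _ ⟨⟨a, b⟩, rfl⟩
      exact Submodule.subset_span ⟨(a, b, y), rfl⟩)
    have hm := map_mem_closure (t := (Submodule.span ℂ G : Set X)) (L.flip y).continuous
      (P.dense_span t) fun y hy => hle hy
    exact hm
  exact this (h x)

lemma forward_ess [IsScalarTower ℂ T T] [SMulCommClass ℂ T T]
    (P : IsProjTensorProduct A B T) (S : UBAI A) (S' : UBAI B)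
    (hA : Amenable A) (hB : Amenable B)
    (X : Type) [NormedAddCommGroup X] [NormedSpace ℂ X] [CompleteSpace X]
    (σ : BanachBimodule T X) (D : T →L[ℂ] (X →L[ℂ] ℂ)) (hE : Ess σ)
    (hD : IsDualDerivation σ D) : IsInnerDualDerivation σ D := by
  have hC := S.C_nonneg
  have hC' := S'.C_nonneg
  have bd : ∀ {Z : Type} [NormedAddCommGroup Z] [NormedSpace ℂ Z] (M : T →L[ℂ] X →L[ℂ] Z),
      (∀ j a x, ‖M (P.ι a (S'.z j)) x‖ ≤ ‖M‖ * S'.C * ‖a‖ * ‖x‖) ∧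
      (∀ i b x, ‖M (P.ι (S.z i) b) x‖ ≤ ‖M‖ * S.C * ‖b‖ * ‖x‖) := by
    intro Z _ _ M
    constructor
    · intro j a x
      refine (M.le_opNorm₂ _ _).trans ?_
      have : ‖P.ι a (S'.z j)‖ ≤ S'.C * ‖a‖ := by
        refine (P.norm_ι _ _).trans ?_
        rw [mul_comm]; gcongr; exact S'.bdd j
      rw [mul_assoc ‖M‖ S'.C]
      exact mul_le_mul_of_nonneg_right (mul_le_mul_of_nonneg_left this M.opNorm_nonneg)
        (norm_nonneg _)
    · intro j a x
      refine (M.le_opNorm₂ _ _).trans ?_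
      have : ‖P.ι (S.z j) a‖ ≤ S.C * ‖a‖ := by
        refine (P.norm_ι _ _).trans ?_
        gcongr; exact S.bdd j
      rw [mul_assoc ‖M‖ S.C]
      exact mul_le_mul_of_nonneg_right (mul_le_mul_of_nonneg_left this M.opNorm_nonneg)
        (norm_nonneg _)
  have cA : ∀ {Z : Type} [NormedAddCommGroup Z] [NormedSpace ℂ Z] (M : T →L[ℂ] X →L[ℂ] Z) b x,
      Continuous fun a => M (P.ι a b) x := by
    intro Z _ _ M b x
    fun_prop
  have cB : ∀ {Z : Type} [NormedAddCommGroup Z] [NormedSpace ℂ Z] (M : T →L[ℂ] X →L[ℂ] Z) a x,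
      Continuous fun b => M (P.ι a b) x := by
    intro Z _ _ M b x
    fun_prop
  have dL := dense_of_ess P σ.L hE.1
  have dR := dense_of_ess P σ.R hE.2
  have sw : ∀ (M : T →L[ℂ] X →L[ℂ] X), (∀ x, x ∈ closure (Submodule.span ℂ
      (Set.range fun p : A × B × X => M (P.ι p.1 p.2.1) p.2.2) : Set X)) →
      (∀ x, x ∈ closure (Submodule.span ℂ
      (Set.range fun p : B × A × X => M (P.ι p.2.1 p.1) p.2.2) : Set X)) := by
    intro M h x
    have : (Set.range fun p : B × A × X => M (P.ι p.2.1 p.1) p.2.2) =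
        (Set.range fun p : A × B × X => M (P.ι p.1 p.2.1) p.2.2) := by
      ext y
      constructor
      · rintro ⟨⟨b, a, x⟩, rfl⟩
        exact ⟨(a, b, x), rfl⟩
      · rintro ⟨⟨a, b, x⟩, rfl⟩
        exact ⟨(b, a, x), rfl⟩
    rw [this]
    exact h x
  have hL : ∀ a b c d x, σ.L (P.ι a b) (σ.L (P.ι c d) x) = σ.L (P.ι (a * c) (b * d)) x := by
    intro a b c d x
    rw [← P.ι_mul, σ.L_mul]; rfl
  have hR : ∀ a b c d x, σ.R (P.ι a b) (σ.R (P.ι c d) x) = σ.R (P.ι (c * a) (d * b)) x := by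
    intro a b c d x
    rw [← P.ι_mul, σ.R_mul]; rfl
  obtain ⟨lam, lam1, lam2, lam3⟩ := half (S'.u : Filter S'.I) S'.z (fun a b => σ.L (P.ι a b))
    (fun j => σ.L.comp (P.ι.flip (S'.z j))) (fun _ _ => rfl) _ (bd σ.L).1
    (fun a b => a * b) (fun a b => a * b) hL
    (fun a d x => ((cB σ.L a x).tendsto _).comp (S'.left d)) dL mul_assoc
  obtain ⟨rho, rho1, rho2, rho3⟩ := half (S'.u : Filter S'.I) S'.z (fun a b => σ.R (P.ι a b))
    (fun j => σ.R.comp (P.ι.flip (S'.z j))) (fun _ _ => rfl) _ (bd σ.R).1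
    (fun a b => b * a) (fun a b => b * a) hR
    (fun a d x => ((cB σ.R a x).tendsto _).comp (S'.right d)) dR
    (fun a b c => (mul_assoc _ _ _).symm)
  obtain ⟨lam', lam1', lam2', lam3'⟩ := half (S.u : Filter S.I) S.z
    (fun b a => σ.L (P.ι a b))
    (fun j => σ.L.comp (P.ι (S.z j))) (fun _ _ => rfl) _ (bd σ.L).2
    (fun a b => a * b) (fun a b => a * b) (fun b a d c x => hL a b c d x)
    (fun a d x => ((cA σ.L a x).tendsto _).comp (S.left d)) (sw _ dL) mul_assoc
  obtain ⟨rho', rho1', rho2', rho3'⟩ := half (S.u : Filter S.I) S.z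
    (fun b a => σ.R (P.ι a b))
    (fun j => σ.R.comp (P.ι (S.z j))) (fun _ _ => rfl) _ (bd σ.R).2
    (fun a b => b * a) (fun a b => b * a) (fun b a d c x => hR a b c d x)
    (fun a d x => ((cA σ.R a x).tendsto _).comp (S.right d)) (sw _ dR)
    (fun a b c => (mul_assoc _ _ _).symm)
  -- products
  have l1 : ∀ a b x, lam a (lam' b x) = σ.L (P.ι a b) x := by
    intro a b x
    refine ext_span _ dL (f := (lam a).comp (lam' b)) (g := σ.L (P.ι a b)) ?_ x
    rintro _ ⟨⟨c, d, y⟩, rfl⟩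
    simp only [ContinuousLinearMap.comp_apply, lam2', lam2, hL]
  have l2 : ∀ a b x, lam' b (lam a x) = σ.L (P.ι a b) x := by
    intro a b x
    refine ext_span _ dL (f := (lam' b).comp (lam a)) (g := σ.L (P.ι a b)) ?_ x
    rintro _ ⟨⟨c, d, y⟩, rfl⟩
    simp only [ContinuousLinearMap.comp_apply, lam2', lam2, hL]
  have r1 : ∀ a b x, rho a (rho' b x) = σ.R (P.ι a b) x := by
    intro a b x
    refine ext_span _ dR (f := (rho a).comp (rho' b)) (g := σ.R (P.ι a b)) ?_ x
    rintro _ ⟨⟨c, d, y⟩, rfl⟩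
    simp only [ContinuousLinearMap.comp_apply, rho2', rho2, hR]
  have r2 : ∀ a b x, rho' b (rho a x) = σ.R (P.ι a b) x := by
    intro a b x
    refine ext_span _ dR (f := (rho' b).comp (rho a)) (g := σ.R (P.ι a b)) ?_ x
    rintro _ ⟨⟨c, d, y⟩, rfl⟩
    simp only [ContinuousLinearMap.comp_apply, rho2', rho2, hR]
  have c1 : ∀ a b x, rho b (lam a x) = lam a (rho b x) := fun a b x =>
    comm_lim _ _ _ _ _ _ (rho1 b) (lam1 a) (fun i j x => σ.LR_comm _ _ x) x
  have c2 : ∀ a b x, rho b (lam' a x) = lam' a (rho b x) := fun a b x =>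
    comm_lim _ _ _ _ _ _ (rho1 b) (lam1' a) (fun i j x => σ.LR_comm _ _ x) x
  have c3 : ∀ a b x, rho' b (lam a x) = lam a (rho' b x) := fun a b x =>
    comm_lim _ _ _ _ _ _ (rho1' b) (lam1 a) (fun i j x => σ.LR_comm _ _ x) x
  have c4 : ∀ a b x, rho' b (lam' a x) = lam' a (rho' b x) := fun a b x =>
    comm_lim _ _ _ _ _ _ (rho1' b) (lam1' a) (fun i j x => σ.LR_comm _ _ x) x
  let σA : BanachBimodule A X := ⟨lam, rho, fun a b => ContinuousLinearMap.ext (lam3 a b),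
    fun a b => ContinuousLinearMap.ext (rho3 b a), c1⟩
  let σB : BanachBimodule B X := ⟨lam', rho', fun a b => ContinuousLinearMap.ext (lam3' a b),
    fun a b => ContinuousLinearMap.ext (rho3' b a), c4⟩
  have hDt : ∀ (D : T →L[ℂ] (X →L[ℂ] ℂ)), IsDualDerivation σ D → ∀ a b c d x,
      D (P.ι (a * c) (b * d)) x =
        D (P.ι c d) (σ.R (P.ι a b) x) + D (P.ι a b) (σ.L (P.ι c d) x) := by
    intro D hD a b c d x
    rw [← P.ι_mul]
    exact hD _ _ _
  -- first reduction
  obtain ⟨dA, hdA⟩ := lim2 (S'.u : Filter S'.I) (fun j => D.comp (P.ι.flip (S'.z j))) _ (bd D).1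
    (fun a x => exists_lim_ultra S'.u _ _ (fun j => (bd D).1 j a x))
  obtain ⟨g, hg⟩ := hA X inferInstance inferInstance inferInstance σA dA (fun a c x =>
    lim_der S' (fun a b => D (P.ι a b)) (fun a b => σ.L (P.ι a b)) (fun a b => σ.R (P.ι a b))
      (hDt D hD) (cB D) lam rho dA lam1 rho1 hdA a c x)
  obtain ⟨D', hD', hD'e, hfin⟩ := sub_inner σ D hD g
  refine hfin ?_
  have z0 : ∀ a x, Tendsto (fun j => D' (P.ι a (S'.z j)) x) S'.u (𝓝 0) := by
    intro a x
    simp only [hD'e]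
    have h1 := (hdA a x).sub (((g.continuous.tendsto _).comp (rho1 a x)).sub
      ((g.continuous.tendsto _).comp (lam1 a x)))
    have h2 := hg a x
    rw [h2] at h1
    simpa [σA, Function.comp_def] using h1
  obtain ⟨dB, hdB⟩ := lim2 (S.u : Filter S.I) (fun j => D'.comp (P.ι (S.z j))) _ (bd D').2
    (fun a x => exists_lim_ultra S.u _ _ (fun j => (bd D').2 j a x))
  have k1 : ∀ a b x, D' (P.ι a b) x = dB b (rho a x) := by
    intro a b x
    have : ∀ i, D' (P.ι (a * S.z i) b) x = D' (P.ι (S.z i) b) (rho a x) := by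
      intro i
      refine tendsto_nhds_unique (((cB D' (a * S.z i) x).tendsto _).comp (S'.left b)) ?_
      simp only [Function.comp_def, hDt D' hD']
      simpa using (((D' (P.ι (S.z i) b)).continuous.tendsto _).comp (rho1 a x)).add (z0 a _)
    refine tendsto_nhds_unique (((cA D' b x).tendsto _).comp (S.right a)) ?_
    simp only [Function.comp_def, this]
    exact hdB b _
  have k2 : ∀ a b x, D' (P.ι a b) x = dB b (lam a x) := by
    intro a b x
    have : ∀ i, D' (P.ι (S.z i * a) b) x = D' (P.ι (S.z i) b) (lam a x) := by
      intro i
      refine tendsto_nhds_unique (((cB D' (S.z i * a) x).tendsto _).comp (S'.right b)) ?_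
      simp only [Function.comp_def, hDt D' hD']
      simpa using (z0 a _).add (((D' (P.ι (S.z i) b)).continuous.tendsto _).comp (lam1 a x))
    refine tendsto_nhds_unique (((cA D' b x).tendsto _).comp (S.left a)) ?_
    simp only [Function.comp_def, this]
    exact hdB b _
  have hdBd : ∀ a c x, dB (a * c) x = dB c (rho' a x) + dB a (lam' c x) := fun a c x =>
    lim_der S (fun b a => D' (P.ι a b)) (fun b a => σ.L (P.ι a b)) (fun b a => σ.R (P.ι a b))
      (fun b a d c x => hDt D' hD' a b c d x) (cA D') lam' rho' dB lam1' rho1' hdB a c x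
  -- second step
  let W : Submodule ℂ (X →L[ℂ] ℂ) :=
    { carrier := {φ | ∀ a x, φ (rho a x) = φ (lam a x)}
      add_mem' := by
        intro φ ψ h1 h2 a x
        simp [h1 a x, h2 a x]
      zero_mem' := by intro a x; simp
      smul_mem' := by
        intro c φ h a x
        simp [h a x] }
  have hW : ∀ φ : X →L[ℂ] ℂ, φ ∈ W ↔ ∀ a x, φ (rho a x) = φ (lam a x) := fun φ => Iff.rfl
  have WL : ∀ b, ∀ φ ∈ W, (dualB σB).L b φ ∈ W := by
    intro b φ h a x
    change φ (rho' b (rho a x)) = φ (rho' b (lam a x))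
    rw [r2, ← r1, c3]
    exact h a _
  have WR : ∀ b, ∀ φ ∈ W, (dualB σB).R b φ ∈ W := by
    intro b φ h a x
    change φ (lam' b (rho a x)) = φ (lam' b (lam a x))
    rw [l2, ← l1, ← c2]
    exact h a _
  have dBW : ∀ b, dB b ∈ W := fun b a x => by rw [← k1, ← k2]
  obtain ⟨h, h1, h2⟩ := pull_back hB W.subtypeL (restr (dualB σB) W WL WR)
    (dB.codRestrict W dBW) (by
      intro a b
      apply Subtype.ext
      apply ContinuousLinearMap.ext
      intro x
      exact hdBd a b x)
  replace h1 : ∀ a x, h (rho a x) = h (lam a x) := fun a x => h1 _ _ fun φ => φ.2 a x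
  replace h2 : ∀ b x, dB b x = h (rho' b x) - h (lam' b x) := fun b x =>
    h2 b x _ _ (fun φ => rfl) (fun φ => rfl)
  refine ⟨h, fun t x => ?_⟩
  have key : D'.flip x = h.comp (σ.R.flip x) - h.comp (σ.L.flip x) := by
    refine ext_tensor P fun a b => ?_
    change D' (P.ι a b) x = h (σ.R (P.ι a b) x) - h (σ.L (P.ι a b) x)
    rw [k1, h2, r2, ← c2, h1, l1]
  exact DFunLike.congr_fun key t

lemma forward [IsScalarTower ℂ T T] [SMulCommClass ℂ T T]
    (P : IsProjTensorProduct A B T) (S : UBAI A) (S' : UBAI B)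
    (hA : Amenable A) (hB : Amenable B) : Amenable T := by
  obtain ⟨S''⟩ := ubai_tensor P S S'
  refine reduce S'' ?_
  intro X _ _ _ σ D hE hD
  exact forward_ess P S S' hA hB X σ D hE hD

lemma amenable_op (hA : Amenable A) : Amenable Aᵐᵒᵖ := by
  intro X _ _ _ σ D hD
  let q : A →L[ℂ] Aᵐᵒᵖ := (MulOpposite.opContinuousLinearEquiv ℂ (M := A))
  have hq : ∀ a b, q (a * b) = q b * q a := fun _ _ => rfl
  let σ' : BanachBimodule A X := ⟨σ.R.comp q, σ.L.comp q,
    fun a b => σ.R_mul (q b) (q a), fun a b => σ.L_mul (q b) (q a),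
    fun a b x => (σ.LR_comm (q b) (q a) x).symm⟩
  obtain ⟨f, hf⟩ := hA X inferInstance inferInstance inferInstance σ' (D.comp q) (by
    intro a b x
    have := hD (q b) (q a) x
    rw [← hq] at this
    exact this.trans (add_comm _ _))
  refine ⟨-f, fun a x => ?_⟩
  have : D a x = f (σ.L a x) - f (σ.R a x) := hf a.unop x
  rw [this]
  simp only [neg_apply]
  ring

end forward

end S9

/-- for a Banach algebra `A` with a bounded approximate identity, the
amenability of `A`, of `A ⊗̂ A`, and of `A ⊗̂ Aᵒᵖ` are equivalent. -/
theorem stmt9 {A T₁ T₂ : Type*} [NonUnitalNormedRing A] [NormedSpace ℂ A] [IsScalarTower ℂ A A] [SMulCommClass ℂ A A] [CompleteSpace A] [NonUnitalNormedRing T₁] [NormedSpace ℂ T₁] [IsScalarTower ℂ T₁ T₁] [SMulCommClass ℂ T₁ T₁] [CompleteSpace T₁] [NonUnitalNormedRing T₂] [NormedSpace ℂ T₂] [IsScalarTower ℂ T₂ T₂] [SMulCommClass ℂ T₂ T₂] [CompleteSpace T₂]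
    (P₁ : IsProjTensorProduct A A T₁) (P₂ : IsProjTensorProduct A Aᵐᵒᵖ T₂)
    (hA : HasBAI A) :
    (Amenable A ↔ Amenable T₁) ∧ (Amenable A ↔ Amenable T₂) := by
  obtain ⟨S⟩ := S9.ubai_of_hasBAI hA
  exact ⟨⟨fun h => S9.forward P₁ S S h h, S9.converse1 P₁ S⟩,
    ⟨fun h => S9.forward P₂ S S.op h (S9.amenable_op h), S9.converse2 P₂ S⟩⟩
end
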